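/- A sequence (G_n) of finite simple graphs with |V(G_n)| → ∞ is convergent (i.e., the sequence of real numbers (t(F,G_n))_n converges for every finite simple graph F) if and only if it is a Cauchy sequence in the cut distance δ_□ (i.e., for every ε > 0 there is N such that δ_□(G_m, G_n) ≤ ε for all m, n ≥ N). -/

import Mathlib

open MeasureTheory Set Filter

/-- The Lebesgue measure restricted to `[0,1]`. -/
noncomputable abbrev μ01 : MeasureTheory.Measure ℝ :=
  MeasureTheory.volume.restrict (Set.Icc (0:ℝ) 1)

/-- A graphon: a symmetric measurable function `[0,1]² → [0,1]`
(defined on all of `ℝ²` for convenience). -/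
def IsGraphon (W : ℝ → ℝ → ℝ) : Prop :=
  Measurable (Function.uncurry W) ∧ (∀ x y, W x y = W y x) ∧ ∀ x y, W x y ∈ Set.Icc (0:ℝ) 1

-- The homomorphism density `t(F,W)` of a finite simple graph `F` in a graphon `W`.
open scoped Classical in
noncomputable def homDensity {n : ℕ} (F : SimpleGraph (Fin n)) (W : ℝ → ℝ → ℝ) : ℝ :=
  ∫ x : Fin n → ℝ,
    (∏ p ∈ Finset.univ.filter (fun p : Fin n × Fin n => p.1 < p.2 ∧ F.Adj p.1 p.2),
      W (x p.1) (x p.2)) ∂(MeasureTheory.Measure.pi fun _ => μ01)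

/-- The cut norm `‖U‖_□` of a kernel `U`. -/
noncomputable def cutNorm (U : ℝ → ℝ → ℝ) : ℝ :=
  sSup { r : ℝ | ∃ S T : Set ℝ, MeasurableSet S ∧ MeasurableSet T ∧
    S ⊆ Set.Icc (0:ℝ) 1 ∧ T ⊆ Set.Icc (0:ℝ) 1 ∧
    r = |∫ x in S, ∫ y in T, U x y| }

/-- An invertible measure preserving map of `[0,1]` onto itself. -/
def IsInvMeasurePreserving (φ : ℝ → ℝ) : Prop :=
  Set.MapsTo φ (Set.Icc (0:ℝ) 1) (Set.Icc (0:ℝ) 1) ∧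
  MeasureTheory.MeasurePreserving φ μ01 μ01 ∧
  ∃ ψ : ℝ → ℝ, Set.MapsTo ψ (Set.Icc (0:ℝ) 1) (Set.Icc (0:ℝ) 1) ∧
    MeasureTheory.MeasurePreserving ψ μ01 μ01 ∧
    (∀ x ∈ Set.Icc (0:ℝ) 1, ψ (φ x) = x) ∧ (∀ x ∈ Set.Icc (0:ℝ) 1, φ (ψ x) = x)

/-- The cut distance `δ_□(U,W)` between two graphons. -/
noncomputable def cutDist (U W : ℝ → ℝ → ℝ) : ℝ :=
  sInf { r : ℝ | ∃ φ : ℝ → ℝ, IsInvMeasurePreserving φ ∧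
    r = cutNorm (fun x y => U x y - W (φ x) (φ y)) }

-- The step-function graphon `W_G` associated with a finite simple graph `G` on `{0,…,n−1}`,
-- using the intervals `J_i = [i/n, (i+1)/n)`.
open scoped Classical in
noncomputable def graphonOf {n : ℕ} (G : SimpleGraph (Fin n)) : ℝ → ℝ → ℝ :=
  fun x y =>
    if ∃ i j : Fin n, G.Adj i j ∧
        x ∈ Set.Ico (((i : ℕ) : ℝ) / n) ((((i : ℕ) : ℝ) + 1) / n) ∧
        y ∈ Set.Ico (((j : ℕ) : ℝ) / n) ((((j : ℕ) : ℝ) + 1) / n)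
    then 1 else 0

-- The homomorphism density `t(F,G) = hom(F,G)/|V(G)|^{|V(F)|}` for finite simple graphs.
open scoped Classical in
noncomputable def homDensityFin {m n : ℕ} (F : SimpleGraph (Fin m)) (G : SimpleGraph (Fin n)) : ℝ :=
  (Fintype.card { f : Fin m → Fin n // ∀ i j, F.Adj i j → G.Adj (f i) (f j) } : ℝ) / (n : ℝ) ^ m


namespace CutAux

open Finset in
/-- Jensen inequality for squares. -/
lemma jensen_sq {ι : Type*} [Fintype ι] (w f : ι → ℝ) (hw : ∀ i, 0 ≤ w i) (h1 : ∑ i, w i = 1) :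
    (∑ i, w i * f i) ^ 2 ≤ ∑ i, w i * f i ^ 2 := by
  set m := ∑ i, w i * f i with hm
  have h : 0 ≤ ∑ i, w i * (f i - m) ^ 2 :=
    Finset.sum_nonneg fun i _ => mul_nonneg (hw i) (sq_nonneg _)
  have h2 : ∑ i, w i * (f i - m) ^ 2 = ∑ i, w i * f i ^ 2 - m ^ 2 := by
    have : ∀ i, w i * (f i - m) ^ 2 = w i * f i ^ 2 - 2 * m * (w i * f i) + m ^ 2 * w i := by
      intro i; ring
    simp only [this, Finset.sum_add_distrib, Finset.sum_sub_distrib, ← Finset.mul_sum, h1, ← hm]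
    ring
  linarith

/-- The `C₄` functional of a kernel on a weighted finite set. -/
noncomputable def C4 {ι : Type*} [Fintype ι] (w : ι → ℝ) (R : ι → ι → ℝ) : ℝ :=
  ∑ y, ∑ y', w y * w y' * (∑ x, w x * (R x y * R x y')) ^ 2

lemma C4_nonneg {ι : Type*} [Fintype ι] (w : ι → ℝ) (R : ι → ι → ℝ) (hw : ∀ i, 0 ≤ w i) :
    0 ≤ C4 w R :=
  Finset.sum_nonneg fun y _ => Finset.sum_nonneg fun y' _ =>
    mul_nonneg (mul_nonneg (hw y) (hw y')) (sq_nonneg _)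

lemma C4_expand {ι : Type*} [Fintype ι] (w : ι → ℝ) (R : ι → ι → ℝ) :
    C4 w R = ∑ x', ∑ y', ∑ x, ∑ y, w x' * w y' * (w x * w y) *
      (R x' y' * (R x y * (R x y' * R x' y))) := by
  unfold C4
  simp only [sq, Finset.sum_mul_sum]
  simp only [Finset.mul_sum]
  -- lhs : ∑ y, y', x, x'
  have e1 : ∀ g : ι → ι → ι → ι → ℝ, (∑ y, ∑ y', ∑ x, ∑ x', g y y' x x') =
      ∑ x', ∑ y', ∑ x, ∑ y, g y y' x x' := by
    intro g
    calc (∑ y, ∑ y', ∑ x, ∑ x', g y y' x x')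
        = ∑ y, ∑ x', ∑ y', ∑ x, g y y' x x' := by
          refine Finset.sum_congr rfl fun y _ => ?_
          rw [Finset.sum_comm (f := fun x' y' => ∑ x, g y y' x x')]
          exact Finset.sum_congr rfl fun a _ => Finset.sum_comm
      _ = ∑ x', ∑ y, ∑ y', ∑ x, g y y' x x' := Finset.sum_comm
      _ = ∑ x', ∑ y', ∑ y, ∑ x, g y y' x x' := by
          refine Finset.sum_congr rfl fun a _ => Finset.sum_comm
      _ = _ := by
          refine Finset.sum_congr rfl fun a _ => Finset.sum_congr rfl fun b _ => Finset.sum_comm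
  rw [e1]
  refine Finset.sum_congr rfl fun a _ => Finset.sum_congr rfl fun b _ =>
    Finset.sum_congr rfl fun c _ => Finset.sum_congr rfl fun d _ => ?_
  ring

/-- `C₄` controls the (fractional) cut norm. -/
lemma cut_le_C4 {ι : Type*} [Fintype ι] (w : ι → ℝ) (hw : ∀ i, 0 ≤ w i) (h1 : ∑ i, w i = 1)
    (R : ι → ι → ℝ) (s t : ι → ℝ) (hs : ∀ i, |s i| ≤ 1) (ht : ∀ i, |t i| ≤ 1) :
    (∑ x, ∑ y, w x * w y * (R x y * (s x * t y))) ^ 4 ≤ C4 w R := by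
  have hA : (∑ x, ∑ y, w x * w y * (R x y * (s x * t y))) =
      ∑ x, w x * (s x * ∑ y, w y * (R x y * t y)) := by
    refine Finset.sum_congr rfl fun x _ => ?_
    rw [Finset.mul_sum, Finset.mul_sum]
    exact Finset.sum_congr rfl fun y _ => by ring
  have hs2 : ∀ x, s x ^ 2 ≤ 1 := fun x => by
    have := hs x; rw [← sq_abs]; nlinarith [abs_nonneg (s x)]
  have ht2 : ∀ x, t x ^ 2 ≤ 1 := fun x => by
    have := ht x; rw [← sq_abs]; nlinarith [abs_nonneg (t x)]
  have hB : (∑ x, w x * (s x * ∑ y, w y * (R x y * t y))) ^ 2 ≤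
      ∑ x, w x * (∑ y, w y * (R x y * t y)) ^ 2 := by
    refine (jensen_sq w _ hw h1).trans (Finset.sum_le_sum fun x _ => ?_)
    refine mul_le_mul_of_nonneg_left ?_ (hw x)
    rw [mul_pow]
    nlinarith [hs2 x, sq_nonneg (∑ y, w y * (R x y * t y))]
  have hC : ∑ x, w x * (∑ y, w y * (R x y * t y)) ^ 2 =
      ∑ y, w y * ∑ y', w y' * (t y * t y' * ∑ x, w x * (R x y * R x y')) := by
    simp only [sq, Finset.sum_mul_sum]
    simp only [Finset.mul_sum]
    rw [Finset.sum_comm]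
    refine Finset.sum_congr rfl fun y _ => ?_
    rw [Finset.sum_comm]
    refine Finset.sum_congr rfl fun y' _ => Finset.sum_congr rfl fun x _ => by ring
  have hD : (∑ y, w y * ∑ y', w y' * (t y * t y' * ∑ x, w x * (R x y * R x y'))) ^ 2 ≤ C4 w R := by
    refine (jensen_sq w _ hw h1).trans ?_
    unfold C4
    refine Finset.sum_le_sum fun y _ => ?_
    calc _ ≤ w y * ∑ y', w y' * (t y * t y' * ∑ x, w x * (R x y * R x y')) ^ 2 :=
          mul_le_mul_of_nonneg_left (jensen_sq w _ hw h1) (hw y)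
      _ ≤ _ := by
        rw [Finset.mul_sum]
        refine Finset.sum_le_sum fun y' _ => ?_
        rw [← mul_assoc]
        refine mul_le_mul_of_nonneg_left ?_ (mul_nonneg (hw _) (hw _))
        rw [mul_pow, mul_pow]
        have h3 : t y ^ 2 * t y' ^ 2 ≤ 1 := by
          nlinarith [ht2 y, ht2 y', sq_nonneg (t y), sq_nonneg (t y')]
        nlinarith [sq_nonneg (∑ x, w x * (R x y * R x y'))]
  rw [hA]
  calc (∑ x, w x * (s x * ∑ y, w y * (R x y * t y))) ^ 4
      = ((∑ x, w x * (s x * ∑ y, w y * (R x y * t y))) ^ 2) ^ 2 := by ring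
    _ ≤ (∑ x, w x * (∑ y, w y * (R x y * t y)) ^ 2) ^ 2 :=
        pow_le_pow_left₀ (sq_nonneg _) hB 2
    _ ≤ C4 w R := by rw [hC]; exact hD

/-- Energy of a kernel. -/
noncomputable def En {ι : Type*} [Fintype ι] (w : ι → ℝ) (R : ι → ι → ℝ) : ℝ :=
  ∑ x, ∑ y, w x * w y * R x y ^ 2

lemma reg_step {ι : Type*} [Fintype ι] (w : ι → ℝ) (hw : ∀ i, 0 ≤ w i) (h1 : ∑ i, w i = 1)
    (B : ι → ι → Bool) {κ : Type} (P : ι → κ) (D : κ → κ → ℝ)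
    (hD : ∀ a b, D a b ∈ Set.Icc (0:ℝ) 1) (ε : ℝ) (hε : 0 < ε)
    (hC : ε < C4 w (fun x y => (if B x y then 1 else 0) - D (P x) (P y))) :
    ∃ (P' : ι → κ × Bool × Bool) (D' : κ × Bool × Bool → κ × Bool × Bool → ℝ),
      (∀ a b, D' a b ∈ Set.Icc (0:ℝ) 1) ∧
      En w (fun x y => (if B x y then 1 else 0) - D' (P' x) (P' y)) ≤
        En w (fun x y => (if B x y then 1 else 0) - D (P x) (P y)) - ε ^ 2 := by
  set A : ι → ι → ℝ := fun x y => if B x y then 1 else 0 with hA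
  have hA01 : ∀ x y, A x y = 0 ∨ A x y = 1 := by
    intro x y; simp only [hA]; split_ifs <;> simp
  set R : ι → ι → ℝ := fun x y => A x y - D (P x) (P y) with hR
  have hR1 : ∀ x y, |R x y| ≤ 1 := by
    intro x y
    have := hD (P x) (P y)
    rw [abs_le]
    simp only [hR]
    rcases hA01 x y with h | h <;> rw [h] <;> constructor <;> linarith [this.1, this.2]
  have hwit : ∃ x' y', ε ≤ |∑ x, ∑ y, w x * w y * (R x y * (R x y' * R x' y))| := by
    by_contra hcon
    push Not at hcon
    have : C4 w R ≤ ε := by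
      rw [C4_expand]
      calc _ = ∑ x', ∑ y', w x' * w y' *
              (R x' y' * ∑ x, ∑ y, w x * w y * (R x y * (R x y' * R x' y))) := by
            refine Finset.sum_congr rfl fun a _ => Finset.sum_congr rfl fun b _ => ?_
            simp only [Finset.mul_sum]
            refine Finset.sum_congr rfl fun c _ => Finset.sum_congr rfl fun d _ => by ring
        _ ≤ ∑ x', ∑ y', w x' * w y' * ε := by
            refine Finset.sum_le_sum fun a _ => Finset.sum_le_sum fun b _ => ?_
            refine mul_le_mul_of_nonneg_left ?_ (mul_nonneg (hw _) (hw _))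
            refine (le_abs_self _).trans ?_
            rw [abs_mul]
            nlinarith [hR1 a b, hcon a b, abs_nonneg (R a b),
              abs_nonneg (∑ x, ∑ y, w x * w y * (R x y * (R x b * R a y)))]
        _ = ε := by
            simp only [← Finset.sum_mul, ← Finset.mul_sum, h1, mul_one, one_mul]
    linarith
  obtain ⟨x', y', hv⟩ := hwit
  set v := ∑ x, ∑ y, w x * w y * (R x y * (R x y' * R x' y)) with hvdef
  let f : κ × Bool × Bool → ℝ := fun a => (if a.2.1 then 1 else 0) - D a.1 (P y')
  let g : κ × Bool × Bool → ℝ := fun b => (if b.2.2 then 1 else 0) - D (P x') b.1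
  let P' : ι → κ × Bool × Bool := fun x => (P x, B x y', B x' x)
  refine ⟨P', fun a b => max 0 (min 1 (D a.1 b.1 + v * (f a * g b))), ?_, ?_⟩
  · intro a b
    exact ⟨le_max_left _ _, max_le zero_le_one (min_le_left _ _)⟩
  · have hf : ∀ x, f (P' x) = R x y' := fun x => rfl
    have hg : ∀ y, g (P' y) = R x' y := fun y => rfl
    have hclamp : ∀ a z : ℝ, (a = 0 ∨ a = 1) → (a - max 0 (min 1 z)) ^ 2 ≤ (a - z) ^ 2 := by
      intro a z ha
      rcases le_total z 0 with h | h
      · rw [min_eq_right (by linarith), max_eq_left h]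
        rcases ha with rfl | rfl <;> nlinarith
      · rcases le_total z 1 with h' | h'
        · rw [min_eq_right h', max_eq_right h]
        · rw [min_eq_left h', max_eq_right zero_le_one]
          rcases ha with rfl | rfl <;> nlinarith
    calc _ ≤ ∑ x, ∑ y, w x * w y * (R x y - v * (R x y' * R x' y)) ^ 2 := by
          unfold En
          refine Finset.sum_le_sum fun x _ => Finset.sum_le_sum fun y _ => ?_
          refine mul_le_mul_of_nonneg_left ?_ (mul_nonneg (hw _) (hw _))
          have := hclamp (A x y) (D (P x) (P y) + v * (R x y' * R x' y)) (hA01 x y)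
          have h2 : A x y - (D (P x) (P y) + v * (R x y' * R x' y)) =
            R x y - v * (R x y' * R x' y) := by simp only [hR]; ring
          rw [h2] at this
          exact this
      _ = En w R - 2 * v * v + v ^ 2 * ∑ x, ∑ y, w x * w y * (R x y' * R x' y) ^ 2 := by
          rw [mul_assoc, hvdef, ← hvdef]
          conv_rhs => rw [hvdef]
          rw [← hvdef]
          unfold En
          rw [hvdef, ← hvdef, Finset.mul_sum, Finset.mul_sum, Finset.mul_sum,
            ← Finset.sum_sub_distrib, ← Finset.sum_add_distrib]
          refine Finset.sum_congr rfl fun x _ => ?_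
          rw [Finset.mul_sum, Finset.mul_sum, Finset.mul_sum,
            ← Finset.sum_sub_distrib, ← Finset.sum_add_distrib]
          refine Finset.sum_congr rfl fun y _ => ?_
          ring
      _ ≤ En w R - ε ^ 2 := by
          have h5 : ∑ x, ∑ y, w x * w y * (R x y' * R x' y) ^ 2 ≤ 1 := by
            calc _ ≤ ∑ x, ∑ y, w x * w y * 1 := by
                  refine Finset.sum_le_sum fun x _ => Finset.sum_le_sum fun y _ => ?_
                  refine mul_le_mul_of_nonneg_left ?_ (mul_nonneg (hw _) (hw _))
                  rw [← sq_abs, abs_mul]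
                  have := mul_le_one₀ (hR1 x y') (abs_nonneg _) (hR1 x' y)
                  exact pow_le_one₀ (by positivity) this
              _ = 1 := by
                  simp only [← Finset.mul_sum, h1, mul_one]
          have h6 : ε ^ 2 ≤ v ^ 2 := by
            rw [← sq_abs v]; exact pow_le_pow_left₀ hε.le hv 2
          nlinarith [sq_nonneg v]

/-- Weak regularity lemma, `C₄` form. -/
lemma regularity (ε : ℝ) (hε : 0 < ε) : ∃ M : ℕ, ∀ {ι : Type} [Fintype ι] (w : ι → ℝ)
    (_ : ∀ i, 0 ≤ w i) (_ : ∑ i, w i = 1) (B : ι → ι → Bool),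
    ∃ (P : ι → Fin M) (D : Fin M → Fin M → ℝ), (∀ a b, D a b ∈ Set.Icc (0:ℝ) 1) ∧
      C4 w (fun x y => (if B x y then 1 else 0) - D (P x) (P y)) ≤ ε := by
  obtain ⟨l, hl⟩ := exists_nat_gt (1 / ε ^ 2)
  have hl1 : 1 < l * ε ^ 2 := by
    rwa [div_lt_iff₀ (by positivity)] at hl
  refine ⟨4 ^ l, ?_⟩
  intro ι _ w hw h1 B
  have main : ∀ r : ℕ, r ≤ l →
      (∃ (κ : Type) (_ : Fintype κ) (P : ι → κ) (D : κ → κ → ℝ), Fintype.card κ ≤ 4 ^ l ∧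
        (∀ a b, D a b ∈ Set.Icc (0:ℝ) 1) ∧
        C4 w (fun x y => (if B x y then 1 else 0) - D (P x) (P y)) ≤ ε) ∨
      (∃ (κ : Type) (_ : Fintype κ) (P : ι → κ) (D : κ → κ → ℝ), Fintype.card κ ≤ 4 ^ r ∧
        (∀ a b, D a b ∈ Set.Icc (0:ℝ) 1) ∧
        En w (fun x y => (if B x y then 1 else 0) - D (P x) (P y)) ≤ 1 - r * ε ^ 2) := by
    intro r
    induction r with
    | zero =>
      intro _
      right
      refine ⟨Unit, inferInstance, fun _ => (), fun _ _ => 0, by simp, by simp, ?_⟩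
      unfold En
      calc _ ≤ ∑ x, ∑ y, w x * w y * 1 := by
            refine Finset.sum_le_sum fun x _ => Finset.sum_le_sum fun y _ => ?_
            refine mul_le_mul_of_nonneg_left ?_ (mul_nonneg (hw _) (hw _))
            simp only
            split_ifs <;> norm_num
        _ = 1 := by simp only [← Finset.mul_sum, h1, mul_one]
        _ ≤ _ := by simp
    | succ r ih =>
      intro hr
      rcases ih (by omega) with h | ⟨κ, _, P, D, hc, hD, hE⟩
      · exact Or.inl h
      · by_cases hC : C4 w (fun x y => (if B x y then 1 else 0) - D (P x) (P y)) ≤ ε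
        · left
          exact ⟨κ, _, P, D, hc.trans (Nat.pow_le_pow_right (by norm_num) (by omega)), hD, hC⟩
        · right
          obtain ⟨P', D', hD', hE'⟩ := reg_step w hw h1 B P D hD ε hε (not_le.mp hC)
          refine ⟨κ × Bool × Bool, inferInstance, P', D', ?_, hD', ?_⟩
          · simp only [Fintype.card_prod, Fintype.card_bool, pow_succ]
            omega
          · push_cast
            linarith
  rcases main l le_rfl with ⟨κ, _, P, D, hc, hD, hC⟩ | ⟨κ, _, P, D, hc, hD, hE⟩
  · obtain ⟨e⟩ : Nonempty (κ ↪ Fin (4 ^ l)) :=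
      Function.Embedding.nonempty_of_card_le (by simpa using hc)
    have hne : Nonempty κ := by
      by_contra hcon
      rw [not_nonempty_iff] at hcon
      have : IsEmpty ι := ⟨fun i => hcon.elim (P i)⟩
      simp at h1
    refine ⟨fun x => e (P x), fun a b => D (Function.invFun e a) (Function.invFun e b),
      fun a b => hD _ _, ?_⟩
    simpa only [Function.leftInverse_invFun e.injective _] using hC
  · exfalso
    have : 0 ≤ En w (fun x y => (if B x y then 1 else 0) - D (P x) (P y)) :=
      Finset.sum_nonneg fun y _ => Finset.sum_nonneg fun y' _ =>
        mul_nonneg (mul_nonneg (hw y) (hw y')) (sq_nonneg _)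
    linarith

end CutAux

namespace CutAux

section Sampling

variable {α ι : Type} [Fintype α] [DecidableEq α] [Fintype ι]

/-- Product weight. -/
noncomputable def Wt (w : ι → ℝ) (f : α → ι) : ℝ := ∏ i, w (f i)

lemma Wt_nonneg (w : ι → ℝ) (hw : ∀ i, 0 ≤ w i) (f : α → ι) : 0 ≤ Wt w f :=
  Finset.prod_nonneg fun _ _ => hw _

lemma Wt_sum (w : ι → ℝ) (h1 : ∑ i, w i = 1) : ∑ f : α → ι, Wt w f = 1 := by
  have := (Finset.prod_univ_sum (fun _ : α => (Finset.univ : Finset ι)) (fun _ j => w j)).symm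
  rw [Fintype.piFinset_univ] at this
  unfold Wt
  rw [this]
  simp [h1]

lemma avg_update (w : ι → ℝ) (h1 : ∑ i, w i = 1) (a : α) (Φ : (α → ι) → ℝ) :
    ∑ h : α → ι, Wt w h * Φ h =
      ∑ x, w x * ∑ h : α → ι, Wt w h * Φ (Function.update h a x) := by
  have hinv : Function.Involutive
      (fun p : (α → ι) × ι => ((Function.update p.1 a p.2, p.1 a) : (α → ι) × ι)) := by
    intro p
    ext <;> simp
  have e1 : ∑ x, w x * ∑ h : α → ι, Wt w h * Φ (Function.update h a x) =
      ∑ p : (α → ι) × ι, Wt w p.1 * w p.2 * Φ (Function.update p.1 a p.2) := by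
    rw [Fintype.sum_prod_type, Finset.sum_comm]
    refine Finset.sum_congr rfl fun h _ => ?_
    rw [Finset.mul_sum]
    exact Finset.sum_congr rfl fun x _ => by ring
  have e2 : ∑ h : α → ι, Wt w h * Φ h = ∑ p : (α → ι) × ι, Wt w p.1 * w p.2 * Φ p.1 := by
    rw [Fintype.sum_prod_type]
    refine Finset.sum_congr rfl fun h _ => ?_
    have : ∀ y, Wt w h * w y * Φ h = Wt w h * Φ h * w y := fun y => by ring
    simp only [this, ← Finset.mul_sum, h1, mul_one]
  rw [e1, e2, ← Equiv.sum_comp hinv.toPerm]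
  refine Finset.sum_congr rfl fun p _ => ?_
  have : Wt w (Function.update p.1 a p.2) * w (p.1 a) = Wt w p.1 * w p.2 := by
    unfold Wt
    rw [← Finset.mul_prod_erase _ _ (Finset.mem_univ a),
      ← Finset.mul_prod_erase _ (fun i => w (p.1 i)) (Finset.mem_univ a)]
    have : ∏ x ∈ Finset.univ.erase a, w (Function.update p.1 a p.2 x) =
        ∏ x ∈ Finset.univ.erase a, w (p.1 x) := by
      refine Finset.prod_congr rfl fun x hx => ?_
      rw [Function.update_of_ne (Finset.ne_of_mem_erase hx)]
    rw [this]
    simp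
    ring
  simp only [Function.Involutive.coe_toPerm]
  rw [this]

lemma avg4 (w : ι → ℝ) (h1 : ∑ i, w i = 1) (a b c d : α) (hab : a ≠ b) (hac : a ≠ c)
    (had : a ≠ d) (hbc : b ≠ c) (hbd : b ≠ d) (hcd : c ≠ d) (g : ι → ι → ι → ι → ℝ) :
    ∑ h : α → ι, Wt w h * g (h a) (h b) (h c) (h d) =
      ∑ x, w x * ∑ y, w y * ∑ z, w z * ∑ t, w t * g x y z t := by
  rw [avg_update w h1 a]
  refine Finset.sum_congr rfl fun x _ => ?_
  congr 1
  simp only [Function.update_self, Function.update_of_ne hab.symm, Function.update_of_ne hac.symm,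
    Function.update_of_ne had.symm]
  rw [avg_update w h1 b]
  refine Finset.sum_congr rfl fun y _ => ?_
  congr 1
  simp only [Function.update_self, Function.update_of_ne hbc.symm, Function.update_of_ne hbd.symm]
  rw [avg_update w h1 c]
  refine Finset.sum_congr rfl fun z _ => ?_
  congr 1
  simp only [Function.update_self, Function.update_of_ne hcd.symm]
  rw [avg_update w h1 d]
  refine Finset.sum_congr rfl fun t _ => ?_
  congr 1
  simp only [Function.update_self, ← Finset.sum_mul, Wt_sum w h1, one_mul]

lemma avg2_zero (w : ι → ℝ) (h1 : ∑ i, w i = 1) (a b : α) (hab : a ≠ b) (g : ι → ℝ)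
    (hg : ∑ x, w x * g x = 0) :
    ∑ h : α → ι, Wt w h * (g (h a) * g (h b)) = 0 := by
  rw [avg_update w h1 a]
  simp only [Function.update_self, Function.update_of_ne hab.symm]
  have : ∀ x, w x * ∑ h : α → ι, Wt w h * (g x * g (h b)) =
      (w x * g x) * ∑ h : α → ι, Wt w h * g (h b) := by
    intro x
    rw [Finset.mul_sum, Finset.mul_sum]
    exact Finset.sum_congr rfl fun h _ => by ring
  simp only [this, ← Finset.sum_mul, hg, zero_mul]

lemma avg_le_one (w : ι → ℝ) (hw : ∀ i, 0 ≤ w i) (h1 : ∑ i, w i = 1)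
    (Φ : (α → ι) → ℝ) (hΦ : ∀ h, Φ h ≤ 1) : ∑ h : α → ι, Wt w h * Φ h ≤ 1 := by
  calc _ ≤ ∑ h : α → ι, Wt w h * 1 :=
        Finset.sum_le_sum fun h _ => mul_le_mul_of_nonneg_left (hΦ h) (Wt_nonneg w hw h)
    _ = 1 := by simp [Wt_sum w h1]

end Sampling

/-- Uniform weights. -/
noncomputable def unif (ι : Type) [Fintype ι] : ι → ℝ := fun _ => 1 / (Fintype.card ι : ℝ)

lemma unif_nonneg (ι : Type) [Fintype ι] (i : ι) : 0 ≤ unif ι i := by unfold unif; positivity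

lemma unif_sum (ι : Type) [Fintype ι] [Nonempty ι] : ∑ i, unif ι i = 1 := by
  simp [unif]

lemma mean_sq {ι : Type} [Fintype ι] (w : ι → ℝ) (hw : ∀ i, 0 ≤ w i) (h1 : ∑ i, w i = 1)
    (k : ℕ) (hk : 0 < k) (g : ι → ℝ) (hg : ∑ x, w x * g x = 0) (hg1 : ∀ x, |g x| ≤ 1) :
    ∑ f : Fin k → ι, Wt w f * (∑ i, unif (Fin k) i * g (f i)) ^ 2 ≤ 1 / k := by
  have e : ∀ f : Fin k → ι, Wt w f * (∑ i, unif (Fin k) i * g (f i)) ^ 2 =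
      ∑ i, ∑ j, (1 / k * (1 / k)) * (Wt w f * (g (f i) * g (f j))) := by
    intro f
    rw [sq, Finset.sum_mul_sum, Finset.mul_sum]
    refine Finset.sum_congr rfl fun i _ => ?_
    rw [Finset.mul_sum]
    refine Finset.sum_congr rfl fun j _ => ?_
    simp only [unif, Fintype.card_fin]
    ring
  simp only [e]
  rw [Finset.sum_comm]
  have hk' : (0:ℝ) < k := by exact_mod_cast hk
  calc _ ≤ ∑ i : Fin k, ∑ j : Fin k, (1 / (k:ℝ) * (1 / k)) * (if i = j then 1 else 0) := by
        refine Finset.sum_le_sum fun i _ => ?_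
        rw [Finset.sum_comm]
        refine Finset.sum_le_sum fun j _ => ?_
        rw [← Finset.mul_sum]
        refine mul_le_mul_of_nonneg_left ?_ (by positivity)
        split_ifs with hij
        · subst hij
          refine avg_le_one w hw h1 _ fun h => ?_
          have := hg1 (h i)
          rw [← sq, ← sq_abs]
          exact pow_le_one₀ (abs_nonneg _) this
        · exact (avg2_zero w h1 i j hij g hg).le
    _ = 1 / k := by
        simp
        field_simp

lemma mean_C4 {ι : Type} [Fintype ι] (w : ι → ℝ) (hw : ∀ i, 0 ≤ w i) (h1 : ∑ i, w i = 1)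
    (k : ℕ) (hk : 0 < k) (R : ι → ι → ℝ) (hR : ∀ x y, |R x y| ≤ 1) :
    ∑ f : Fin k → ι, Wt w f * C4 (unif (Fin k)) (fun i j => R (f i) (f j)) ≤
      C4 w R + 6 / k := by
  have hk' : (0:ℝ) < k := by exact_mod_cast hk
  have e : ∀ f : Fin k → ι, Wt w f * C4 (unif (Fin k)) (fun i j => R (f i) (f j)) =
      ∑ p : Fin k × Fin k × Fin k × Fin k, (1 / (k:ℝ)) ^ 4 * (Wt w f *
        (R (f p.1) (f p.2.1) * (R (f p.2.2.1) (f p.2.2.2) *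
          (R (f p.2.2.1) (f p.2.1) * R (f p.1) (f p.2.2.2))))) := by
    intro f
    rw [C4_expand]
    simp only [Fintype.sum_prod_type, Finset.mul_sum]
    refine Finset.sum_congr rfl fun a _ => Finset.sum_congr rfl fun b _ =>
      Finset.sum_congr rfl fun c _ => Finset.sum_congr rfl fun d _ => ?_
    simp only [unif, Fintype.card_fin]
    ring
  simp only [e]
  rw [Finset.sum_comm]
  have hC0 := C4_nonneg w R hw
  calc _ ≤ ∑ p : Fin k × Fin k × Fin k × Fin k, (1 / (k:ℝ)) ^ 4 * (C4 w R +
          ((if p.1 = p.2.1 then 1 else 0) + (if p.1 = p.2.2.1 then 1 else 0) +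
          (if p.1 = p.2.2.2 then 1 else 0) + (if p.2.1 = p.2.2.1 then 1 else 0) +
          (if p.2.1 = p.2.2.2 then 1 else 0) + (if p.2.2.1 = p.2.2.2 then 1 else 0))) := by
        refine Finset.sum_le_sum fun p _ => ?_
        obtain ⟨a, b, c, d⟩ := p
        rw [← Finset.mul_sum]
        refine mul_le_mul_of_nonneg_left ?_ (by positivity)
        simp only
        have hle1 : ∑ f : Fin k → ι, Wt w f * (R (f a) (f b) * (R (f c) (f d) *
          (R (f c) (f b) * R (f a) (f d)))) ≤ 1 := by
          refine avg_le_one w hw h1 _ fun f => (le_abs_self _).trans ?_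
          simp only [abs_mul]
          exact mul_le_one₀ (hR _ _) (by positivity) (mul_le_one₀ (hR _ _) (by positivity)
            (mul_le_one₀ (hR _ _) (by positivity) (hR _ _)))
        have i0 : ∀ p : Prop, ∀ [Decidable p], (0:ℝ) ≤ if p then 1 else 0 := by
          intro p _; split_ifs <;> norm_num
        have q1 := i0 (a = b)
        have q2 := i0 (a = c)
        have q3 := i0 (a = d)
        have q4 := i0 (b = c)
        have q5 := i0 (b = d)
        have q6 := i0 (c = d)
        by_cases hab : a = b
        · rw [if_pos hab]; linarith
        by_cases hac : a = c
        · rw [if_pos hac]; linarith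
        by_cases had : a = d
        · rw [if_pos had]; linarith
        by_cases hbc : b = c
        · rw [if_pos hbc]; linarith
        by_cases hbd : b = d
        · rw [if_pos hbd]; linarith
        by_cases hcd : c = d
        · rw [if_pos hcd]; linarith
        have := avg4 w h1 a b c d hab hac had hbc hbd hcd
          (fun x' y' x y => R x' y' * (R x y * (R x y' * R x' y)))
        rw [this]
        have h7 : (∑ x, w x * ∑ y, w y * ∑ z, w z * ∑ t, w t *
            (R x y * (R z t * (R z y * R x t)))) = C4 w R := by
          rw [C4_expand]
          simp only [Finset.mul_sum]
          refine Finset.sum_congr rfl fun a _ => Finset.sum_congr rfl fun b _ =>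
            Finset.sum_congr rfl fun c _ => Finset.sum_congr rfl fun d _ => ?_
          ring
        rw [h7]
        linarith
    _ = C4 w R + 6 / k := by
        rw [← Finset.mul_sum]
        simp only [Fintype.sum_prod_type, Finset.sum_add_distrib]
        have hc : ∀ c : ℝ, ∑ _i : Fin k, c = k * c := fun c => by simp
        have s0 : ∀ i : Fin k, ∑ j : Fin k, (if i = j then (1:ℝ) else 0) = 1 := fun i => by simp
        have s1 : ∀ i : Fin k, ∑ j : Fin k, ∑ _l : Fin k, (if i = j then (1:ℝ) else 0) = k :=
          fun i => by
            rw [Finset.sum_congr rfl fun j _ => hc (if i = j then (1:ℝ) else 0),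
              ← Finset.mul_sum, s0, mul_one]
        have s2 : ∀ i : Fin k, ∑ j : Fin k, ∑ _l : Fin k, ∑ _r : Fin k,
            (if i = j then (1:ℝ) else 0) = k * k := fun i => by
          rw [Finset.sum_congr rfl fun j _ => Finset.sum_congr rfl fun l _ =>
            hc (if i = j then (1:ℝ) else 0),
            Finset.sum_congr rfl fun j _ => (Finset.mul_sum _ _ _).symm, ← Finset.mul_sum, s1]
        simp only [s0, s1, s2, hc]
        field_simp
        ring

open scoped Classical in
/-- Real adjacency matrix. -/
noncomputable def adjM {V : Type} (G : SimpleGraph V) : V → V → ℝ :=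
  fun x y => if G.Adj x y then 1 else 0

lemma adjM_mem {V : Type} (G : SimpleGraph V) (x y : V) : adjM G x y = 0 ∨ adjM G x y = 1 := by
  unfold adjM; split_ifs <;> simp

/-- `G` and `H` have approximately the same regularity data. -/
def Good (ε : ℝ) (M : ℕ) {V U : Type} [Fintype V] [Fintype U]
    (G : SimpleGraph V) (H : SimpleGraph U) : Prop :=
  ∃ (P : V → Fin M) (Q : U → Fin M) (D : Fin M → Fin M → ℝ),
    (∀ a b, D a b ∈ Set.Icc (0:ℝ) 1) ∧
    C4 (unif V) (fun x y => adjM G x y - D (P x) (P y)) ≤ ε ∧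
    C4 (unif U) (fun x y => adjM H x y - D (Q x) (Q y)) ≤ ε ∧
    (∑ p, |∑ i, unif U i * (if Q i = p then 1 else 0) -
      ∑ x, unif V x * (if P x = p then 1 else 0)|) ^ 2 ≤ ε

open scoped Classical in
lemma sampling (ε : ℝ) (hε : 0 < ε) : ∃ M k : ℕ, 0 < k ∧ ∀ n : ℕ, 0 < n →
    ∀ G : SimpleGraph (Fin n), (3:ℝ) / 4 ≤
      ∑ f : Fin k → Fin n, if Good ε M G (G.comap f) then Wt (unif (Fin n)) f else 0 := by
  obtain ⟨M, hM⟩ := regularity (ε / 8) (by positivity)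
  obtain ⟨k, hk⟩ := exists_nat_gt (max 1 ((6 + (M:ℝ) ^ 2) * 8 / ε))
  have hk1 : (1:ℝ) < k := (le_max_left _ _).trans_lt hk
  have hk0 : 0 < k := by
    have : (0:ℝ) < k := by linarith
    exact_mod_cast this
  have hk2 : (6 + (M:ℝ) ^ 2) / k ≤ ε / 8 := by
    have := (le_max_right _ _).trans_lt hk
    rw [div_lt_iff₀ hε] at this
    rw [div_le_iff₀ (by linarith)]
    linarith
  refine ⟨M, k, hk0, fun n hn G => ?_⟩
  have : NeZero n := ⟨hn.ne'⟩
  have : NeZero k := ⟨hk0.ne'⟩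
  set w := unif (Fin n) with hwdef
  have hw : ∀ i, 0 ≤ w i := unif_nonneg _
  have h1 : ∑ i, w i = 1 := unif_sum _
  obtain ⟨P, D, hD, hC⟩ := hM w hw h1 (fun x y => decide (G.Adj x y))
  have hC' : C4 w (fun x y => adjM G x y - D (P x) (P y)) ≤ ε / 8 := by
    simpa [adjM] using hC
  set R : Fin n → Fin n → ℝ := fun x y => adjM G x y - D (P x) (P y) with hR
  have hR1 : ∀ x y, |R x y| ≤ 1 := by
    intro x y
    have := hD (P x) (P y)
    rw [abs_le]
    simp only [hR]
    rcases adjM_mem G x y with h | h <;> rw [h] <;> constructor <;> linarith [this.1, this.2]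
  have hX := mean_C4 w hw h1 k hk0 R hR1
  let m : Fin M → ℝ := fun p => ∑ x, w x * (if P x = p then 1 else 0)
  let g : Fin M → Fin n → ℝ := fun p x => (if P x = p then 1 else 0) - m p
  have hm0 : ∀ p, 0 ≤ m p := fun p => Finset.sum_nonneg fun x _ =>
    mul_nonneg (hw x) (by split_ifs <;> norm_num)
  have hm1 : ∀ p, m p ≤ 1 := fun p => by
    rw [← h1]
    refine Finset.sum_le_sum fun x _ => ?_
    have := hw x
    split_ifs <;> linarith
  have hg0 : ∀ p, ∑ x, w x * g p x = 0 := by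
    intro p
    simp only [g, mul_sub, Finset.sum_sub_distrib, ← Finset.sum_mul, h1, one_mul]
    simp [m]
  have hg1 : ∀ p x, |g p x| ≤ 1 := by
    intro p x
    have := hm0 p
    have := hm1 p
    simp only [g]
    rw [abs_le]
    split_ifs <;> constructor <;> linarith
  let Y : (Fin k → Fin n) → ℝ := fun f => ∑ p, (∑ i, unif (Fin k) i * g p (f i)) ^ 2
  have hY : ∑ f, Wt w f * Y f ≤ M / k := by
    simp only [Y, Finset.mul_sum]
    rw [Finset.sum_comm]
    calc _ ≤ ∑ p : Fin M, (1:ℝ) / k :=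
          Finset.sum_le_sum fun p _ => mean_sq w hw h1 k hk0 (g p) (hg0 p) (hg1 p)
      _ = M / k := by simp; ring
  let X : (Fin k → Fin n) → ℝ := fun f => C4 (unif (Fin k)) (fun i j => R (f i) (f j))
  let Z : (Fin k → Fin n) → ℝ := fun f => X f + M * Y f
  have hX0 : ∀ f, 0 ≤ X f := fun f => C4_nonneg _ _ (unif_nonneg _)
  have hY0 : ∀ f, 0 ≤ Y f := fun f => Finset.sum_nonneg fun p _ => sq_nonneg _
  have hZ : ∑ f, Wt w f * Z f ≤ ε / 4 := by
    have : ∑ f, Wt w f * Z f = ∑ f, Wt w f * X f + M * ∑ f, Wt w f * Y f := by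
      rw [Finset.mul_sum, ← Finset.sum_add_distrib]
      exact Finset.sum_congr rfl fun f _ => by simp only [Z]; ring
    rw [this]
    have h2 : (M:ℝ) * ∑ f, Wt w f * Y f ≤ M * (M / k) :=
      mul_le_mul_of_nonneg_left hY (Nat.cast_nonneg _)
    have h3 : (6 + (M:ℝ) ^ 2) / k = 6 / k + M * (M / k) := by ring
    linarith
  have hgood : ∀ f, Z f ≤ ε → Good ε M G (G.comap f) := by
    intro f hf
    have hXf : X f ≤ ε := by
      have : 0 ≤ (M:ℝ) * Y f := mul_nonneg (Nat.cast_nonneg _) (hY0 f)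
      simp only [Z] at hf; linarith
    have hYf : M * Y f ≤ ε := by
      have := hX0 f
      simp only [Z] at hf; linarith
    refine ⟨P, fun i => P (f i), D, hD, by linarith, hXf, ?_⟩
    refine le_trans ?_ hYf
    have hgi : ∀ p, ∑ i, unif (Fin k) i * (if P (f i) = p then 1 else 0) -
      ∑ x, unif (Fin n) x * (if P x = p then 1 else 0) = ∑ i, unif (Fin k) i * g p (f i) := by
      intro p
      simp only [g, mul_sub, Finset.sum_sub_distrib, ← Finset.sum_mul, unif_sum, one_mul]
      rfl
    simp only [hgi, Y]
    have := sq_sum_le_card_mul_sum_sq (s := (Finset.univ : Finset (Fin M)))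
      (f := fun p => |∑ i, unif (Fin k) i * g p (f i)|)
    simpa [sq_abs] using this
  have hbad : ∑ f : Fin k → Fin n, (Wt w f - if Good ε M G (G.comap f) then Wt w f else 0) ≤
      ∑ f, Wt w f * Z f / ε := by
    refine Finset.sum_le_sum fun f _ => ?_
    have hW := Wt_nonneg w hw f
    have hZ0 : 0 ≤ Z f := add_nonneg (hX0 f) (mul_nonneg (Nat.cast_nonneg _) (hY0 f))
    split_ifs with h
    · rw [sub_self]; positivity
    · have : ε < Z f := by
        by_contra hcon; exact h (hgood f (not_lt.mp hcon))
      rw [sub_zero, le_div_iff₀ hε]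
      exact mul_le_mul_of_nonneg_left this.le hW
  rw [Finset.sum_sub_distrib, Wt_sum w h1, ← Finset.sum_div] at hbad
  have : (∑ f, Wt w f * Z f) / ε ≤ 1 / 4 := by
    rw [div_le_iff₀ hε]; linarith
  linarith

end CutAux

namespace CutAux

lemma matching {Ω κ : Type} [Fintype Ω] [DecidableEq Ω] [Fintype κ] [DecidableEq κ]
    (p q : Ω → κ) : ∃ σ : Equiv.Perm Ω,
      ((Finset.univ.filter fun x => p x ≠ q (σ x)).card : ℝ) ≤
        ∑ a, |((Finset.univ.filter fun x => q x = a).card : ℝ) -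
          (Finset.univ.filter fun x => p x = a).card| := by
  obtain ⟨σ, hσ⟩ := Finite.exists_max
    (fun σ : Equiv.Perm Ω => (Finset.univ.filter fun x => p x = q (σ x)).card)
  refine ⟨σ, ?_⟩
  have h1 := Finset.card_eq_sum_card_fiberwise (f := p)
    (s := Finset.univ.filter fun x => p x ≠ q (σ x)) (t := Finset.univ) (by simp)
  rw [h1]
  push_cast
  refine Finset.sum_le_sum fun a _ => ?_
  rcases Finset.eq_empty_or_nonempty
    ((Finset.univ.filter fun x => p x ≠ q (σ x)).filter fun x => p x = a) with h | ⟨x0, hx0⟩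
  · rw [h]; simp
  · simp only [Finset.mem_filter, Finset.mem_univ, true_and] at hx0
    have key : ∀ y, q (σ y) = a → p y = a := by
      intro y hy
      by_contra hpy
      have := hσ (σ * Equiv.swap x0 y)
      refine absurd this (not_le.mpr (Finset.card_lt_card ?_))
      rw [Finset.ssubset_iff_of_subset]
      · refine ⟨x0, ?_, ?_⟩
        · exact Finset.mem_filter.mpr ⟨Finset.mem_univ _, by
            rw [Equiv.Perm.mul_apply, Equiv.swap_apply_left, hy, hx0.2]⟩
        · simp [hx0.1]
      · intro z hz
        simp only [Finset.mem_filter, Finset.mem_univ, true_and] at hz ⊢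
        have hz1 : z ≠ x0 := by rintro rfl; exact hx0.1 hz
        have hz2 : z ≠ y := by rintro rfl; exact hpy (hz.trans hy)
        rw [Equiv.Perm.mul_apply, Equiv.swap_apply_of_ne_of_ne hz1 hz2]
        exact hz
    have hq : (Finset.univ.filter fun x => q x = a).card =
        (Finset.univ.filter fun x => q (σ x) = a).card := by
      rw [← Finset.card_map (s := Finset.univ.filter fun x => q (σ x) = a) σ.toEmbedding]
      congr 1
      ext x
      simp only [Finset.mem_map, Finset.mem_filter, Finset.mem_univ, true_and,
        Equiv.coe_toEmbedding]
      constructor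
      · intro hx; exact ⟨σ.symm x, by simpa using hx, by simp⟩
      · rintro ⟨y, hy, rfl⟩; exact hy
    have hsub : (Finset.univ.filter fun x => q (σ x) = a) ⊆
        (Finset.univ.filter fun x => p x = a) := by
      intro y hy
      simp only [Finset.mem_filter, Finset.mem_univ, true_and] at hy ⊢
      exact key y hy
    have hset : ((Finset.univ.filter fun x => p x ≠ q (σ x)).filter fun x => p x = a) =
        (Finset.univ.filter fun x => p x = a) \ (Finset.univ.filter fun x => q (σ x) = a) := by
      ext y
      simp only [Finset.mem_filter, Finset.mem_univ, true_and, Finset.mem_sdiff]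
      constructor
      · rintro ⟨h, h'⟩; exact ⟨h', fun h'' => h (h'.trans h''.symm)⟩
      · rintro ⟨h, h'⟩; exact ⟨fun h'' => h' (h''.symm.trans h), h⟩
    rw [hset, Finset.card_sdiff_of_subset hsub, Nat.cast_sub (Finset.card_le_card hsub), hq,
      abs_sub_comm]
    exact le_abs_self _

/-- Fractional cut norm bound with respect to the uniform weights. -/
def CutLe {Ω : Type} [Fintype Ω] (u : Ω → Ω → ℝ) (c : ℝ) : Prop :=
  ∀ s t : Ω → ℝ, (∀ i, s i ∈ Set.Icc (0:ℝ) 1) → (∀ i, t i ∈ Set.Icc (0:ℝ) 1) →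
    |∑ x, ∑ y, unif Ω x * unif Ω y * (u x y * (s x * t y))| ≤ c

lemma CutLe.add {Ω : Type} [Fintype Ω] {u v : Ω → Ω → ℝ} {c d : ℝ}
    (hu : CutLe u c) (hv : CutLe v d) : CutLe (fun x y => u x y + v x y) (c + d) := by
  intro s t hs ht
  have := add_le_add (hu s t hs ht) (hv s t hs ht)
  refine le_trans (le_trans (le_of_eq ?_) (abs_add_le _ _)) this
  congr 1
  simp only [← Finset.sum_add_distrib]
  exact Finset.sum_congr rfl fun x _ => Finset.sum_congr rfl fun y _ => by ring

lemma CutLe.neg {Ω : Type} [Fintype Ω] {u : Ω → Ω → ℝ} {c : ℝ}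
    (hu : CutLe u c) : CutLe (fun x y => - u x y) c := by
  intro s t hs ht
  have := hu s t hs ht
  simpa only [neg_mul, mul_neg, Finset.sum_neg_distrib, abs_neg] using this

lemma CutLe.reindex {Ω Ω' : Type} [Fintype Ω] [Fintype Ω'] {u : Ω → Ω → ℝ} {c : ℝ}
    (hu : CutLe u c) (e : Ω' ≃ Ω) : CutLe (fun x y => u (e x) (e y)) c := by
  intro s t hs ht
  have := hu (fun x => s (e.symm x)) (fun x => t (e.symm x)) (fun _ => hs _) (fun _ => ht _)
  rw [← Equiv.sum_comp e] at this
  refine le_trans (le_of_eq ?_) this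
  congr 1
  refine Finset.sum_congr rfl fun x _ => ?_
  rw [← Equiv.sum_comp e]
  simp [unif, Fintype.card_congr e]

lemma CutLe.mono {Ω : Type} [Fintype Ω] {u : Ω → Ω → ℝ} {c d : ℝ}
    (hu : CutLe u c) (h : c ≤ d) : CutLe u d := fun s t hs ht => (hu s t hs ht).trans h

lemma cutLe_of_C4 {Ω : Type} [Fintype Ω] [Nonempty Ω] (u : Ω → Ω → ℝ) (c : ℝ) (hc : 0 ≤ c)
    (h : C4 (unif Ω) u ≤ c ^ 4) : CutLe u c := by
  intro s t hs ht
  have := cut_le_C4 (unif Ω) (unif_nonneg Ω) (unif_sum Ω) u s t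
    (fun i => by rw [abs_le]; exact ⟨by linarith [(hs i).1], (hs i).2⟩)
    (fun i => by rw [abs_le]; exact ⟨by linarith [(ht i).1], (ht i).2⟩)
  have h4 := this.trans h
  rw [← Even.pow_abs (by decide : Even 4)] at h4
  exact le_of_pow_le_pow_left₀ (by norm_num) hc h4

lemma cutLe_of_labels {Ω κ : Type} [Fintype Ω] [Nonempty Ω] [DecidableEq κ] (p p' : Ω → κ)
    (D : κ → κ → ℝ) (hD : ∀ a b, D a b ∈ Set.Icc (0:ℝ) 1) :
    CutLe (fun x y => D (p x) (p y) - D (p' x) (p' y))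
      (2 * ∑ x, unif Ω x * (if p x ≠ p' x then 1 else 0)) := by
  intro s t hs ht
  have hsum := unif_sum Ω
  calc _ ≤ ∑ x, ∑ y, unif Ω x * unif Ω y *
        ((if p x ≠ p' x then 1 else 0) + (if p y ≠ p' y then 1 else 0)) := by
        refine (Finset.abs_sum_le_sum_abs _ _).trans (Finset.sum_le_sum fun x _ => ?_)
        refine (Finset.abs_sum_le_sum_abs _ _).trans (Finset.sum_le_sum fun y _ => ?_)
        have h0 : 0 ≤ unif Ω x * unif Ω y := mul_nonneg (unif_nonneg _ _) (unif_nonneg _ _)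
        rw [abs_mul, abs_of_nonneg h0]
        refine mul_le_mul_of_nonneg_left ?_ h0
        rw [abs_mul]
        have hst : |s x * t y| ≤ 1 := by
          rw [abs_of_nonneg (mul_nonneg (hs x).1 (ht y).1)]
          exact mul_le_one₀ (hs x).2 (ht y).1 (ht y).2
        have hd : |D (p x) (p y) - D (p' x) (p' y)| ≤
            (if p x ≠ p' x then 1 else 0) + (if p y ≠ p' y then 1 else 0) := by
          by_cases hx : p x = p' x
          · by_cases hy : p y = p' y
            · simp [hx, hy]
            · have h1 := hD (p x) (p y)
              have h2 := hD (p' x) (p' y)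
              rw [if_neg (not_not.mpr hx), if_pos hy, abs_le]
              constructor <;> linarith [h1.1, h1.2, h2.1, h2.2]
          · have h1 := hD (p x) (p y)
            have h2 := hD (p' x) (p' y)
            have h3 : (0:ℝ) ≤ if p y ≠ p' y then 1 else 0 := by split_ifs <;> norm_num
            rw [if_pos hx, abs_le]
            constructor <;> linarith [h1.1, h1.2, h2.1, h2.2]
        calc _ ≤ |D (p x) (p y) - D (p' x) (p' y)| * 1 :=
              mul_le_mul_of_nonneg_left hst (abs_nonneg _)
          _ ≤ _ := by rw [mul_one]; exact hd
    _ = _ := by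
        simp only [mul_add, Finset.sum_add_distrib]
        have e1 : ∑ x, ∑ y, unif Ω x * unif Ω y * (if p x ≠ p' x then (1:ℝ) else 0) =
            ∑ x, unif Ω x * (if p x ≠ p' x then 1 else 0) := by
          refine Finset.sum_congr rfl fun x _ => ?_
          rw [← Finset.sum_mul, ← Finset.mul_sum, hsum, mul_one]
        have e2 : ∑ x, ∑ y, unif Ω x * unif Ω y * (if p y ≠ p' y then (1:ℝ) else 0) =
            ∑ x, unif Ω x * (if p x ≠ p' x then 1 else 0) := by
          rw [Finset.sum_comm]
          refine Finset.sum_congr rfl fun x _ => ?_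
          rw [← Finset.sum_mul, ← Finset.sum_mul, hsum, one_mul]
        rw [e1, e2]; ring

/-- Maps that push the uniform weights to the uniform weights. -/
def UnifMap {Ω V : Type} [Fintype Ω] [Fintype V] (a : Ω → V) : Prop :=
  ∀ g : V → ℝ, ∑ ω, unif Ω ω * g (a ω) = ∑ v, unif V v * g v

lemma UnifMap.C4 {Ω V : Type} [Fintype Ω] [Fintype V] {a : Ω → V} (ha : UnifMap a)
    (u : V → V → ℝ) : C4 (unif Ω) (fun x y => u (a x) (a y)) = C4 (unif V) u := by
  unfold CutAux.C4
  have h1 : ∀ y y', ∑ x, unif Ω x * (u (a x) y * u (a x) y') =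
      ∑ x, unif V x * (u x y * u x y') := fun y y' => ha (fun v => u v y * u v y')
  simp only [h1, mul_assoc, ← Finset.mul_sum]
  have h2 := fun y => ha (fun y' => (∑ x, unif V x * (u x y * u x y')) ^ 2)
  simp only [h2]
  exact ha (fun y => ∑ y', unif V y' * (∑ x, unif V x * (u x y * u x y')) ^ 2)

lemma good_cut {V U Ω : Type} [Fintype V] [Fintype U] [Fintype Ω] [Nonempty Ω]
    (c : ℝ) (hc : 0 ≤ c) (hc1 : c ≤ 1)
    (M : ℕ) (G : SimpleGraph V) (H : SimpleGraph U) (h : Good (c ^ 4) M G H)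
    (a : Ω → V) (b : Ω → U) (ha : UnifMap a) (hb : UnifMap b) :
    ∃ σ : Equiv.Perm Ω,
      CutLe (fun x y => adjM G (a x) (a y) - adjM H (b (σ x)) (b (σ y))) (4 * c) := by
  classical
  obtain ⟨P, Q, D, hD, hG, hH, hPQ⟩ := h
  obtain ⟨σ, hσ⟩ := matching (fun x => P (a x)) (fun x => Q (b x))
  refine ⟨σ, ?_⟩
  have hcount : ∀ (p : Ω → Prop) [DecidablePred p],
      ∑ x, unif Ω x * (if p x then (1:ℝ) else 0) =
        1 / (Fintype.card Ω : ℝ) * (Finset.univ.filter p).card := by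
    intro p _
    simp only [unif, ← Finset.mul_sum]
    congr 1
    simp
  have hδ : ∑ x, unif Ω x * (if P (a x) ≠ Q (b (σ x)) then 1 else 0) ≤ c ^ 2 := by
    have hle : ∑ x, unif Ω x * (if P (a x) ≠ Q (b (σ x)) then 1 else 0) ≤
        ∑ p, |∑ i, unif U i * (if Q i = p then 1 else 0) -
          ∑ x, unif V x * (if P x = p then 1 else 0)| := by
      rw [hcount]
      refine (mul_le_mul_of_nonneg_left hσ (by positivity)).trans (le_of_eq ?_)
      rw [Finset.mul_sum]
      refine Finset.sum_congr rfl fun p _ => ?_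
      rw [← ha (fun x => if P x = p then 1 else 0), ← hb (fun x => if Q x = p then 1 else 0),
        hcount, hcount, ← mul_sub, abs_mul, abs_of_nonneg (a := 1 / (Fintype.card Ω : ℝ))
          (by positivity)]
    refine hle.trans (le_of_pow_le_pow_left₀ (n := 2) (by norm_num) (by positivity) ?_)
    calc _ ≤ c ^ 4 := hPQ
      _ = _ := by ring
  have c1 : CutLe (fun x y => adjM G (a x) (a y) - D (P (a x)) (P (a y))) c :=
    cutLe_of_C4 _ c hc ((ha.C4 (fun x y => adjM G x y - D (P x) (P y))).trans_le hG)
  have c2 : CutLe (fun x y => adjM H (b x) (b y) - D (Q (b x)) (Q (b y))) c :=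
    cutLe_of_C4 _ c hc ((hb.C4 (fun x y => adjM H x y - D (Q x) (Q y))).trans_le hH)
  have c3 := cutLe_of_labels (fun x => P (a x)) (fun x => Q (b (σ x))) D hD
  have c4 := ((c1.add c3).add (c2.reindex σ).neg).mono (d := 4 * c) (by nlinarith)
  convert c4 using 3
  ring

lemma good_good_cut {V V' U Ω : Type} [Fintype V] [Fintype V'] [Fintype U] [Fintype Ω]
    [Nonempty Ω] (c : ℝ) (hc : 0 ≤ c) (hc1 : c ≤ 1) (M : ℕ)
    (G : SimpleGraph V) (G' : SimpleGraph V') (H : SimpleGraph U)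
    (h : Good (c ^ 4) M G H) (h' : Good (c ^ 4) M G' H)
    (a : Ω → V) (a' : Ω → V') (b : Ω → U) (ha : UnifMap a) (ha' : UnifMap a') (hb : UnifMap b) :
    ∃ σ : Equiv.Perm Ω,
      CutLe (fun x y => adjM G (a x) (a y) - adjM G' (a' (σ x)) (a' (σ y))) (8 * c) := by
  obtain ⟨σ, hσ⟩ := good_cut c hc hc1 M G H h a b ha hb
  obtain ⟨τ, hτ⟩ := good_cut c hc hc1 M G' H h' a' b ha' hb
  refine ⟨σ.trans τ.symm, ?_⟩
  have := (hσ.add (hτ.reindex (σ.trans τ.symm)).neg).mono (d := 8 * c) (by linarith)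
  convert this using 3
  simp

lemma unifMap_fst {A B : Type} [Fintype A] [Fintype B] [Nonempty B] :
    UnifMap (fun p : A × B => p.1) := by
  intro g
  rw [Fintype.sum_prod_type]
  refine Finset.sum_congr rfl fun x _ => ?_
  simp only [unif, Finset.sum_const, Finset.card_univ, nsmul_eq_mul, Fintype.card_prod]
  have : (Fintype.card B : ℝ) ≠ 0 := by simp
  push_cast
  field_simp

lemma unifMap_snd {A B : Type} [Fintype A] [Fintype B] [Nonempty A] :
    UnifMap (fun p : A × B => p.2) := by
  intro g
  rw [Fintype.sum_prod_type, Finset.sum_comm]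
  refine Finset.sum_congr rfl fun x _ => ?_
  simp only [unif, Finset.sum_const, Finset.card_univ, nsmul_eq_mul, Fintype.card_prod]
  have : (Fintype.card A : ℝ) ≠ 0 := by simp
  push_cast
  field_simp

lemma UnifMap.comp {A B C : Type} [Fintype A] [Fintype B] [Fintype C] {f : A → B} {g : B → C}
    (hf : UnifMap f) (hg : UnifMap g) : UnifMap (fun x => g (f x)) := by
  intro k
  rw [hf (fun x => k (g x)), hg k]

end CutAux

namespace CutAux

lemma integral_code {κ : Type} [Fintype κ] [MeasurableSpace κ] [MeasurableSingletonClass κ]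
    (ν : Measure ℝ) [IsFiniteMeasure ν] (c : ℝ → κ) (hc : Measurable c) (g : κ → ℝ) :
    ∫ y, g (c y) ∂ν = ∑ q, ν.real (c ⁻¹' {q}) * g q := by
  have hfin : IsFiniteMeasure (ν.map c) := Measure.isFiniteMeasure_map ν c
  rw [← integral_map (φ := c) hc.aemeasurable (f := g)
    (Integrable.of_finite).aestronglyMeasurable]
  rw [integral_fintype Integrable.of_finite]
  refine Finset.sum_congr rfl fun q _ => ?_
  rw [map_measureReal_apply hc (measurableSet_singleton q), smul_eq_mul]

lemma finite_restrict (T : Set ℝ) (hT : T ⊆ Set.Icc (0:ℝ) 1) :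
    IsFiniteMeasure (volume.restrict T) := by
  refine ⟨?_⟩
  rw [Measure.restrict_apply_univ]
  exact (measure_mono hT).trans_lt (by simp)

lemma step_integral {κ : Type} [Fintype κ] [MeasurableSpace κ] [MeasurableSingletonClass κ]
    (c : ℝ → κ) (hc : Measurable c) (u : κ → κ → ℝ) (U : ℝ → ℝ → ℝ) (X : Set ℝ)
    (hX : ∀ᵐ x ∂μ01, x ∈ X) (hU : ∀ x ∈ X, ∀ y ∈ X, U x y = u (c x) (c y))
    (S T : Set ℝ) (hS : S ⊆ Set.Icc (0:ℝ) 1) (hT : T ⊆ Set.Icc (0:ℝ) 1) :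
    ∫ x in S, ∫ y in T, U x y =
      ∑ p, ∑ q, (volume.restrict S).real (c ⁻¹' {p}) * (volume.restrict T).real (c ⁻¹' {q}) *
        u p q := by
  have := finite_restrict S hS
  have := finite_restrict T hT
  have hXS : ∀ᵐ x ∂(volume.restrict S), x ∈ X := ae_mono (Measure.restrict_mono hS le_rfl) hX
  have hXT : ∀ᵐ x ∂(volume.restrict T), x ∈ X := ae_mono (Measure.restrict_mono hT le_rfl) hX
  have h1 : ∀ x ∈ X, ∫ y in T, U x y =
      ∑ q, (volume.restrict T).real (c ⁻¹' {q}) * u (c x) q := by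
    intro x hx
    rw [← integral_code _ c hc]
    refine integral_congr_ae ?_
    filter_upwards [hXT] with y hy
    exact hU x hx y hy
  have h2 : ∫ x in S, ∫ y in T, U x y =
      ∫ x in S, (fun p => ∑ q, (volume.restrict T).real (c ⁻¹' {q}) * u p q) (c x) := by
    refine integral_congr_ae ?_
    filter_upwards [hXS] with x hx
    exact h1 x hx
  rw [h2, integral_code _ c hc (fun p => ∑ q, (volume.restrict T).real (c ⁻¹' {q}) * u p q)]
  refine Finset.sum_congr rfl fun p _ => ?_
  rw [Finset.mul_sum]
  exact Finset.sum_congr rfl fun q _ => by ring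

/-- Index of the interval containing `x`. -/
noncomputable def cell (n : ℕ) [NeZero n] (x : ℝ) : Fin n := Fin.ofNat n ⌊(n:ℝ) * x⌋₊

lemma measurable_cell (n : ℕ) [NeZero n] : Measurable (cell n) := by
  unfold cell
  have h1 : Measurable (fun m : ℕ => Fin.ofNat n m) := measurable_of_countable _
  exact h1.comp (Nat.measurable_floor.comp (measurable_const_mul _))

lemma cell_val (n : ℕ) [NeZero n] (x : ℝ) (hx : x ∈ Set.Ico (0:ℝ) 1) :
    (cell n x : ℕ) = ⌊(n:ℝ) * x⌋₊ := by
  have hn : (0:ℝ) < n := by exact_mod_cast Nat.pos_of_ne_zero (NeZero.ne n)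
  unfold cell
  rw [Fin.val_ofNat]
  refine Nat.mod_eq_of_lt ?_
  rw [Nat.floor_lt (mul_nonneg hn.le hx.1)]
  nlinarith [hx.2]

lemma cell_iff (n : ℕ) [NeZero n] (x : ℝ) (hx : x ∈ Set.Ico (0:ℝ) 1) (p : Fin n) :
    cell n x = p ↔ ((p : ℕ) : ℝ) ≤ n * x ∧ n * x < (p : ℕ) + 1 := by
  have hn : (0:ℝ) < n := by exact_mod_cast Nat.pos_of_ne_zero (NeZero.ne n)
  rw [Fin.ext_iff, cell_val n x hx, Nat.floor_eq_iff (mul_nonneg hn.le hx.1)]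

lemma Ico_of_cell (n : ℕ) [NeZero n] (x : ℝ) (p : Fin n)
    (h : ((p : ℕ) : ℝ) ≤ n * x ∧ n * x < (p : ℕ) + 1) : x ∈ Set.Ico (0:ℝ) 1 := by
  have hn : (0:ℝ) < n := by exact_mod_cast Nat.pos_of_ne_zero (NeZero.ne n)
  have hp : ((p : ℕ) : ℝ) + 1 ≤ n := by exact_mod_cast p.2
  have hp0 : (0:ℝ) ≤ ((p : ℕ) : ℝ) := Nat.cast_nonneg _
  constructor
  · by_contra hcon
    push Not at hcon
    nlinarith [h.1]
  · by_contra hcon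
    push Not at hcon
    nlinarith [h.2]

lemma mem_Ico_div_iff (n : ℕ) [NeZero n] (x : ℝ) (p : Fin n) :
    x ∈ Set.Ico (((p : ℕ) : ℝ) / n) ((((p : ℕ) : ℝ) + 1) / n) ↔
      ((p : ℕ) : ℝ) ≤ n * x ∧ n * x < (p : ℕ) + 1 := by
  have hn : (0:ℝ) < n := by exact_mod_cast Nat.pos_of_ne_zero (NeZero.ne n)
  rw [Set.mem_Ico, div_le_iff₀ hn, lt_div_iff₀ hn, mul_comm x]

lemma graphonOf_eq {n : ℕ} [NeZero n] (G : SimpleGraph (Fin n)) (x y : ℝ)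
    (hx : x ∈ Set.Ico (0:ℝ) 1) (hy : y ∈ Set.Ico (0:ℝ) 1) :
    graphonOf G x y = adjM G (cell n x) (cell n y) := by
  unfold graphonOf adjM
  congr 1
  simp only [mem_Ico_div_iff, ← cell_iff n x hx, ← cell_iff n y hy, eq_iff_iff]
  constructor
  · rintro ⟨i, j, h, rfl, rfl⟩; exact h
  · intro h; exact ⟨_, _, h, rfl, rfl⟩

lemma ae_Ico : ∀ᵐ x ∂μ01, x ∈ Set.Ico (0:ℝ) 1 := by
  unfold μ01
  rw [← Measure.restrict_congr_set Ico_ae_eq_Icc]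
  exact ae_restrict_mem measurableSet_Ico

lemma cell_inter (n : ℕ) [NeZero n] (p : Fin n) :
    cell n ⁻¹' {p} ∩ Set.Ico (0:ℝ) 1 =
      Set.Ico (((p : ℕ) : ℝ) / n) ((((p : ℕ) : ℝ) + 1) / n) := by
  ext x
  rw [mem_Ico_div_iff]
  constructor
  · rintro ⟨h, hx⟩; exact (cell_iff n x hx p).mp h
  · intro h
    have hx := Ico_of_cell n x p h
    exact ⟨(cell_iff n x hx p).mpr h, hx⟩

lemma cell_measure (n : ℕ) [NeZero n] (p : Fin n) : μ01.real (cell n ⁻¹' {p}) = 1 / n := by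
  have hn : (0:ℝ) < n := by exact_mod_cast Nat.pos_of_ne_zero (NeZero.ne n)
  unfold μ01
  rw [← Measure.restrict_congr_set Ico_ae_eq_Icc,
    measureReal_restrict_apply (measurable_cell n (measurableSet_singleton p)), cell_inter]
  rw [Real.volume_real_Ico_of_le]
  · ring
  · gcongr; linarith

/-- Interval exchange. -/
noncomputable def exch (n : ℕ) [NeZero n] (σ : Equiv.Perm (Fin n)) (x : ℝ) : ℝ :=
  open scoped Classical in
  if x ∈ Set.Ico (0:ℝ) 1 then
    x + (((σ (cell n x) : ℕ) : ℝ) - ((cell n x : ℕ) : ℝ)) / n else x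

lemma exch_cell' (n : ℕ) [NeZero n] (σ : Equiv.Perm (Fin n)) (x : ℝ)
    (hx : x ∈ Set.Ico (0:ℝ) 1) :
    ((σ (cell n x) : ℕ) : ℝ) ≤ n * exch n σ x ∧ n * exch n σ x < (σ (cell n x) : ℕ) + 1 := by
  have hn : (0:ℝ) < n := by exact_mod_cast Nat.pos_of_ne_zero (NeZero.ne n)
  have h := (cell_iff n x hx _).mp rfl
  unfold exch
  rw [if_pos hx, mul_add, mul_div_cancel₀ _ hn.ne']
  constructor <;> linarith [h.1, h.2]

lemma exch_mem (n : ℕ) [NeZero n] (σ : Equiv.Perm (Fin n)) (x : ℝ)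
    (hx : x ∈ Set.Ico (0:ℝ) 1) : exch n σ x ∈ Set.Ico (0:ℝ) 1 :=
  Ico_of_cell n _ _ (exch_cell' n σ x hx)

lemma exch_cell (n : ℕ) [NeZero n] (σ : Equiv.Perm (Fin n)) (x : ℝ)
    (hx : x ∈ Set.Ico (0:ℝ) 1) : cell n (exch n σ x) = σ (cell n x) :=
  (cell_iff n _ (exch_mem n σ x hx) _).mpr (exch_cell' n σ x hx)

lemma exch_symm (n : ℕ) [NeZero n] (σ τ : Equiv.Perm (Fin n)) (h : ∀ i, τ (σ i) = i) (x : ℝ) :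
    exch n τ (exch n σ x) = x := by
  by_cases hx : x ∈ Set.Ico (0:ℝ) 1
  · rw [exch, if_pos (exch_mem n σ x hx), exch_cell n σ x hx, h, exch, if_pos hx]
    ring
  · have : exch n σ x = x := by rw [exch, if_neg hx]
    rw [this, exch, if_neg hx]

lemma measurable_exch (n : ℕ) [NeZero n] (σ : Equiv.Perm (Fin n)) : Measurable (exch n σ) := by
  unfold exch
  refine Measurable.ite measurableSet_Ico ?_ measurable_id
  have h1 : Measurable (fun i : Fin n => (((σ i : ℕ) : ℝ) - ((i : ℕ) : ℝ)) / n) :=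
    measurable_of_countable _
  exact measurable_id.add (h1.comp (measurable_cell n))

lemma sum_cells (n : ℕ) [NeZero n] (s : Set ℝ) (hs : MeasurableSet s) :
    volume (s ∩ Set.Ico (0:ℝ) 1) =
      ∑ p : Fin n, volume (s ∩ (cell n ⁻¹' {p} ∩ Set.Ico (0:ℝ) 1)) := by
  rw [← measure_biUnion_finset]
  · congr 1
    ext x
    simp
  · intro a _ b _ hab
    refine Set.disjoint_left.mpr ?_
    rintro x ⟨_, h1, _⟩ ⟨_, h2, _⟩
    exact hab (h1.symm.trans h2)
  · intro p _
    exact hs.inter ((measurable_cell n (measurableSet_singleton p)).inter measurableSet_Ico)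

lemma exch_mp (n : ℕ) [NeZero n] (σ : Equiv.Perm (Fin n)) :
    MeasurePreserving (exch n σ) μ01 μ01 := by
  have hn : (0:ℝ) < n := by exact_mod_cast Nat.pos_of_ne_zero (NeZero.ne n)
  refine ⟨measurable_exch n σ, ?_⟩
  unfold μ01
  rw [← Measure.restrict_congr_set Ico_ae_eq_Icc]
  ext s hs
  rw [Measure.map_apply (measurable_exch n σ) hs,
    Measure.restrict_apply (measurable_exch n σ hs), Measure.restrict_apply hs,
    sum_cells n _ (measurable_exch n σ hs), sum_cells n s hs,
    ← Equiv.sum_comp σ (fun p => volume (s ∩ (cell n ⁻¹' {p} ∩ Set.Ico (0:ℝ) 1)))]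
  refine Finset.sum_congr rfl fun p _ => ?_
  have : exch n σ ⁻¹' s ∩ (cell n ⁻¹' {p} ∩ Set.Ico (0:ℝ) 1) =
      (fun x => x + (((σ p : ℕ) : ℝ) - ((p : ℕ) : ℝ)) / n) ⁻¹'
        (s ∩ (cell n ⁻¹' {σ p} ∩ Set.Ico (0:ℝ) 1)) := by
    rw [cell_inter, cell_inter]
    ext x
    simp only [Set.mem_inter_iff, Set.mem_preimage, mem_Ico_div_iff]
    have hmul : (n:ℝ) * (x + (((σ p : ℕ) : ℝ) - ((p : ℕ) : ℝ)) / n) =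
        n * x + (((σ p : ℕ) : ℝ) - ((p : ℕ) : ℝ)) := by
      rw [mul_add, mul_div_cancel₀ _ hn.ne']
    rw [hmul]
    have key : (((p : ℕ) : ℝ) ≤ n * x ∧ n * x < (p : ℕ) + 1) →
        exch n σ x = x + (((σ p : ℕ) : ℝ) - ((p : ℕ) : ℝ)) / n := by
      intro h
      have hx := Ico_of_cell n x p h
      rw [exch, if_pos hx, (cell_iff n x hx p).mpr h]
    constructor
    · rintro ⟨h1, h2⟩
      rw [key h2] at h1
      exact ⟨h1, by linarith [h2.1], by linarith [h2.2]⟩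
    · rintro ⟨h1, h2, h3⟩
      have h4 : ((p : ℕ) : ℝ) ≤ n * x ∧ n * x < (p : ℕ) + 1 := ⟨by linarith, by linarith⟩
      rw [key h4]
      exact ⟨h1, h4⟩
  rw [this, measure_preimage_add_right]

lemma exch_inv (n : ℕ) [NeZero n] (σ : Equiv.Perm (Fin n)) :
    IsInvMeasurePreserving (exch n σ) := by
  have hmaps : ∀ σ : Equiv.Perm (Fin n),
      Set.MapsTo (exch n σ) (Set.Icc (0:ℝ) 1) (Set.Icc (0:ℝ) 1) := by
    intro σ x hx
    by_cases h : x ∈ Set.Ico (0:ℝ) 1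
    · exact Set.Ico_subset_Icc_self (exch_mem n σ x h)
    · rw [exch, if_neg h]; exact hx
  exact ⟨hmaps σ, exch_mp n σ, exch n σ.symm, hmaps _, exch_mp n _,
    fun x _ => exch_symm n σ σ.symm (by simp) x, fun x _ => exch_symm n σ.symm σ (by simp) x⟩

lemma cutDist_le_of_cutLe {L : ℕ} [NeZero L] (σ : Equiv.Perm (Fin L)) (W W' : ℝ → ℝ → ℝ)
    (A A' : Fin L → Fin L → ℝ) (c : ℝ) (hc : 0 ≤ c)
    (hW : ∀ x ∈ Set.Ico (0:ℝ) 1, ∀ y ∈ Set.Ico (0:ℝ) 1, W x y = A (cell L x) (cell L y))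
    (hW' : ∀ x ∈ Set.Ico (0:ℝ) 1, ∀ y ∈ Set.Ico (0:ℝ) 1, W' x y = A' (cell L x) (cell L y))
    (h : CutLe (fun x y => A x y - A' (σ x) (σ y)) c) : cutDist W W' ≤ c := by
  have hL : (0:ℝ) < L := by exact_mod_cast Nat.pos_of_ne_zero (NeZero.ne L)
  have h1 : cutNorm (fun x y => W x y - W' (exch L σ x) (exch L σ y)) ≤ c := by
    refine Real.sSup_le ?_ hc
    rintro r ⟨S, T, hS, hT, hS1, hT1, rfl⟩
    rw [step_integral (cell L) (measurable_cell L) (fun x y => A x y - A' (σ x) (σ y)) _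
      (Set.Ico 0 1) ae_Ico ?_ S T hS1 hT1]
    · have hb : ∀ S : Set ℝ, MeasurableSet S → S ⊆ Set.Icc (0:ℝ) 1 → ∀ p,
          (L:ℝ) * (volume.restrict S).real (cell L ⁻¹' {p}) ∈ Set.Icc (0:ℝ) 1 := by
        intro S _ hS1 p
        refine ⟨by positivity, ?_⟩
        have : (volume.restrict S).real (cell L ⁻¹' {p}) ≤ 1 / L := by
          rw [← cell_measure L p]
          refine ENNReal.toReal_mono (measure_ne_top _ _) ?_
          exact Measure.restrict_mono hS1 le_rfl _
        calc _ ≤ (L:ℝ) * (1 / L) := mul_le_mul_of_nonneg_left this hL.le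
          _ = 1 := by field_simp
      have := h (fun p => L * (volume.restrict S).real (cell L ⁻¹' {p}))
        (fun p => L * (volume.restrict T).real (cell L ⁻¹' {p})) (hb S hS hS1) (hb T hT hT1)
      refine le_trans (le_of_eq ?_) this
      congr 1
      refine Finset.sum_congr rfl fun p _ => Finset.sum_congr rfl fun q _ => ?_
      simp only [unif, Fintype.card_fin]
      field_simp
    · intro x hx y hy
      rw [hW x hx y hy, hW' _ (exch_mem L σ x hx) _ (exch_mem L σ y hy), exch_cell L σ x hx,
        exch_cell L σ y hy]
  refine le_trans (csInf_le ⟨0, ?_⟩ ⟨exch L σ, exch_inv L σ, rfl⟩) h1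
  rintro r ⟨φ, _, rfl⟩
  refine Real.sSup_nonneg ?_
  rintro r ⟨S, T, _, _, _, _, rfl⟩
  exact abs_nonneg _

lemma cell_divNat (n q : ℕ) [NeZero n] [NeZero (n * q)] (x : ℝ) (hx : x ∈ Set.Ico (0:ℝ) 1)
    (r : Fin n × Fin q) (hr : cell (n * q) x = finProdFinEquiv r) : cell n x = r.1 := by
  have hq : 0 < q := Nat.pos_of_ne_zero (fun h => NeZero.ne (n * q) (by simp [h]))
  have hq' : (0:ℝ) < q := by exact_mod_cast hq
  rw [Fin.ext_iff, cell_val n x hx]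
  have h1 := congrArg Fin.val hr
  rw [cell_val _ x hx] at h1
  have h2 : ⌊(n:ℝ) * x⌋₊ = ⌊((n * q : ℕ) : ℝ) * x⌋₊ / q := by
    rw [← Nat.floor_div_natCast]
    congr 1
    push_cast
    field_simp
  rw [h2, h1, finProdFinEquiv_apply_val, Nat.add_mul_div_left _ _ hq,
    Nat.div_eq_of_lt r.2.2, zero_add]

end CutAux

namespace CutAux

lemma exists_equiv (L n q : ℕ) [NeZero L] [NeZero n] (h : L = n * q) :
    ∃ e : Fin L ≃ Fin n × Fin q, ∀ x ∈ Set.Ico (0:ℝ) 1, cell n x = (e (cell L x)).1 := by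
  subst h
  exact ⟨finProdFinEquiv.symm, fun x hx => cell_divNat n q x hx _ (Equiv.apply_symm_apply _ _).symm⟩

lemma unifMap_equiv {A B : Type} [Fintype A] [Fintype B] (e : A ≃ B) : UnifMap e := by
  intro g
  rw [← Equiv.sum_comp e (fun v => unif B v * g v)]
  simp [unif, Fintype.card_congr e]

lemma cutDist_le_of_good {n n' k : ℕ} (hn : 0 < n) (hn' : 0 < n') (hk : 0 < k)
    (G : SimpleGraph (Fin n)) (G' : SimpleGraph (Fin n')) (H : SimpleGraph (Fin k))
    (M : ℕ) (c : ℝ) (hc : 0 ≤ c) (hc1 : c ≤ 1)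
    (h : Good (c ^ 4) M G H) (h' : Good (c ^ 4) M G' H) :
    cutDist (graphonOf G) (graphonOf G') ≤ 8 * c := by
  have : NeZero n := ⟨hn.ne'⟩
  have : NeZero n' := ⟨hn'.ne'⟩
  have : NeZero k := ⟨hk.ne'⟩
  let L := n * n' * k
  have : NeZero L := ⟨by positivity⟩
  obtain ⟨e, he⟩ := exists_equiv L n (n' * k) (by simp only [L]; ring)
  obtain ⟨e', he'⟩ := exists_equiv L n' (n * k) (by simp only [L]; ring)
  obtain ⟨e'', -⟩ := exists_equiv L k (n * n') (by simp only [L]; ring)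
  have : NeZero (n' * k) := ⟨by positivity⟩
  have : NeZero (n * k) := ⟨by positivity⟩
  have : NeZero (n * n') := ⟨by positivity⟩
  obtain ⟨σ, hσ⟩ := good_good_cut c hc hc1 M G G' H h h' (fun x => (e x).1) (fun x => (e' x).1)
    (fun x => (e'' x).1) ((unifMap_equiv e).comp unifMap_fst) ((unifMap_equiv e').comp unifMap_fst)
    ((unifMap_equiv e'').comp unifMap_fst)
  refine cutDist_le_of_cutLe σ (graphonOf G) (graphonOf G')
    (fun x y => adjM G (e x).1 (e y).1) (fun x y => adjM G' (e' x).1 (e' y).1)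
    (8 * c) (by positivity) ?_ ?_ hσ
  · intro x hx y hy
    rw [graphonOf_eq G x y hx hy, he x hx, he y hy]
  · intro x hx y hy
    rw [graphonOf_eq G' x y hx hy, he' x hx, he' y hy]

open scoped Classical in
/-- Distribution of the random induced sample. -/
noncomputable def prob {n k : ℕ} (G : SimpleGraph (Fin n)) (H : SimpleGraph (Fin k)) : ℝ :=
  ∑ f : Fin k → Fin n, if G.comap f = H then Wt (unif (Fin n)) f else 0

lemma prob_nonneg {n k : ℕ} (G : SimpleGraph (Fin n)) (H : SimpleGraph (Fin k)) :
    0 ≤ prob G H := by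
  refine Finset.sum_nonneg fun f _ => ?_
  split_ifs
  · exact Wt_nonneg _ (unif_nonneg _) f
  · exact le_rfl

open scoped Classical in
lemma sum_prob {n k : ℕ} (G : SimpleGraph (Fin n)) (p : SimpleGraph (Fin k) → Prop) :
    ∑ H, (if p H then prob G H else 0) =
      ∑ f : Fin k → Fin n, if p (G.comap f) then Wt (unif (Fin n)) f else 0 := by
  have : ∀ H : SimpleGraph (Fin k), (if p H then prob G H else 0) =
      ∑ f : Fin k → Fin n, if G.comap f = H then
        (if p (G.comap f) then Wt (unif (Fin n)) f else 0) else 0 := by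
    intro H
    unfold prob
    split_ifs with h
    · refine Finset.sum_congr rfl fun f _ => ?_
      by_cases hf : G.comap f = H
      · rw [if_pos hf, if_pos hf, hf, if_pos h]
      · rw [if_neg hf, if_neg hf]
    · symm
      refine Finset.sum_eq_zero fun f _ => ?_
      by_cases hf : G.comap f = H
      · rw [if_pos hf, hf, if_neg h]
      · rw [if_neg hf]
  simp only [this]
  rw [Finset.sum_comm]
  refine Finset.sum_congr rfl fun f _ => ?_
  simp

open scoped Classical in
lemma homDensityFin_eq_prob {n k : ℕ} (F : SimpleGraph (Fin k)) (G : SimpleGraph (Fin n)) :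
    homDensityFin F G = ∑ H, (if F ≤ H then prob G H else 0) := by
  rw [sum_prob]
  unfold homDensityFin
  rw [Fintype.card_subtype]
  have h1 : ∀ f : Fin k → Fin n, Wt (unif (Fin n)) f = 1 / (n:ℝ) ^ k := by
    intro f
    simp [Wt, unif]
  simp only [h1]
  rw [← Finset.sum_filter, Finset.sum_const, nsmul_eq_mul, mul_one_div]
  congr 3
  ext f
  simp only [Finset.mem_filter, Finset.mem_univ, true_and]
  exact ⟨fun h i j hij => h i j hij, fun h i j hij => h hij⟩

open scoped Classical in
lemma prob_tendsto (N : ℕ → ℕ) (G : ∀ i, SimpleGraph (Fin (N i)))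
    (h : ∀ (m : ℕ) (F : SimpleGraph (Fin m)), ∃ L : ℝ,
        Filter.Tendsto (fun i => homDensityFin F (G i)) Filter.atTop (nhds L))
    (k : ℕ) (H : SimpleGraph (Fin k)) :
    ∃ L : ℝ, Filter.Tendsto (fun i => prob (G i) H) Filter.atTop (nhds L) := by
  induction H using WellFoundedGT.induction with
  | ind H ih =>
    obtain ⟨L0, hL0⟩ := h k H
    have ih' : ∀ H' : SimpleGraph (Fin k), ∃ L : ℝ,
        Filter.Tendsto (fun i => if H < H' then prob (G i) H' else 0) Filter.atTop (nhds L) := by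
      intro H'
      by_cases hH : H < H'
      · simpa only [if_pos hH] using ih H' hH
      · simp only [if_neg hH]; exact ⟨0, tendsto_const_nhds⟩
    choose L hL using ih'
    refine ⟨L0 - ∑ H', L H', ?_⟩
    have := hL0.sub (tendsto_finsetSum Finset.univ fun H' _ => hL H')
    refine this.congr fun i => ?_
    rw [homDensityFin_eq_prob, ← Finset.sum_sub_distrib, Finset.sum_eq_single H]
    · simp
    · intro H' _ hne
      by_cases hle : H ≤ H'
      · rw [if_pos hle, if_pos (lt_of_le_of_ne hle hne.symm), sub_self]
      · rw [if_neg hle, if_neg (fun h => hle h.le), sub_self]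
    · simp

open scoped Classical in
lemma exists_common {n n' k M : ℕ} (ε : ℝ) (hn : 0 < n)
    (G : SimpleGraph (Fin n)) (G' : SimpleGraph (Fin n'))
    (h : (3:ℝ) / 4 ≤
      ∑ f : Fin k → Fin n, if Good ε M G (G.comap f) then Wt (unif (Fin n)) f else 0)
    (h' : (3:ℝ) / 4 ≤
      ∑ f : Fin k → Fin n', if Good ε M G' (G'.comap f) then Wt (unif (Fin n')) f else 0)
    (hd : ∑ H : SimpleGraph (Fin k), |prob G H - prob G' H| < 1 / 2) :
    ∃ H : SimpleGraph (Fin k), Good ε M G H ∧ Good ε M G' H := by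
  have : NeZero n := ⟨hn.ne'⟩
  by_contra hcon
  push Not at hcon
  rw [← sum_prob G (fun H => Good ε M G H)] at h
  rw [← sum_prob G' (fun H => Good ε M G' H)] at h'
  have h1 : ∑ H : SimpleGraph (Fin k), prob G H = 1 := by
    have := sum_prob (k := k) G (fun _ => True)
    simp only [if_true] at this
    rw [this, Wt_sum _ (unif_sum _)]
  have h2 : ∑ H : SimpleGraph (Fin k), (if Good ε M G H then prob G H else 0) +
      ∑ H : SimpleGraph (Fin k), (if Good ε M G' H then prob G' H else 0) ≤
      ∑ H : SimpleGraph (Fin k), prob G H + ∑ H : SimpleGraph (Fin k), |prob G H - prob G' H| := by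
    rw [← Finset.sum_add_distrib, ← Finset.sum_add_distrib]
    refine Finset.sum_le_sum fun H _ => ?_
    have p0 := prob_nonneg G H
    have a0 := abs_nonneg (prob G H - prob G' H)
    have a1 := neg_abs_le (prob G H - prob G' H)
    by_cases hG : Good ε M G H
    · rw [if_pos hG, if_neg (hcon H hG)]; linarith
    · rw [if_neg hG]
      split_ifs <;> linarith
  linarith

open scoped Classical in
theorem forward (N : ℕ → ℕ) (G : ∀ i, SimpleGraph (Fin (N i)))
    (hN : Filter.Tendsto N Filter.atTop Filter.atTop)
    (h : ∀ (m : ℕ) (F : SimpleGraph (Fin m)), ∃ L : ℝ,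
        Filter.Tendsto (fun i => homDensityFin F (G i)) Filter.atTop (nhds L))
    (ε : ℝ) (hε : 0 < ε) : ∃ M : ℕ, ∀ i ≥ M, ∀ j ≥ M,
        cutDist (graphonOf (G i)) (graphonOf (G j)) ≤ ε := by
  let c := min 1 (ε / 8)
  have hc : 0 < c := lt_min one_pos (by positivity)
  obtain ⟨M, k, hk, hs⟩ := sampling (c ^ 4) (by positivity)
  choose P hP using prob_tendsto N G h k
  have ht : Tendsto (fun p : ℕ × ℕ => ∑ H, |prob (G p.1) H - prob (G p.2) H|)
      (atTop ×ˢ atTop) (nhds (∑ H, |P H - P H|)) :=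
    tendsto_finsetSum _ fun H _ =>
      (((hP H).comp tendsto_fst).sub ((hP H).comp tendsto_snd)).abs
  have ht' := ht.eventually_lt_const (u := 1 / 2) (by simp)
  rw [prod_atTop_atTop_eq, eventually_atTop] at ht'
  obtain ⟨⟨a, b⟩, hab⟩ := ht'
  obtain ⟨d, hd⟩ := eventually_atTop.mp (hN.eventually_gt_atTop 0)
  refine ⟨max (max a b) d, fun i hi j hj => ?_⟩
  have hi' := hd i (le_trans (le_max_right _ _) hi)
  have hj' := hd j (le_trans (le_max_right _ _) hj)
  have hsum := hab (i, j) ⟨le_trans (le_trans (le_max_left _ _) (le_max_left _ _)) hi,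
    le_trans (le_trans (le_max_right _ _) (le_max_left _ _)) hj⟩
  obtain ⟨H, hH, hH'⟩ := exists_common (c ^ 4) hi' (G i) (G j) (hs _ hi' (G i))
    (hs _ hj' (G j)) hsum
  refine (cutDist_le_of_good hi' hj' hk (G i) (G j) H M c hc.le (min_le_left _ _) hH hH').trans ?_
  have : c ≤ ε / 8 := min_le_right _ _
  linarith

end CutAux

namespace CutAux

section Counting

variable {α ι : Type} [Fintype α] [DecidableEq α] [Fintype ι]

lemma prod01 {β : Type} (E : Finset β) (f : β → ℝ) (hf : ∀ e, f e = 0 ∨ f e = 1) :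
    ∏ e ∈ E, f e = 0 ∨ ∏ e ∈ E, f e = 1 := by
  classical
  by_cases h : ∃ e ∈ E, f e = 0
  · obtain ⟨e, he, h0⟩ := h
    exact Or.inl (Finset.prod_eq_zero he h0)
  · push Not at h
    exact Or.inr (Finset.prod_eq_one fun e he => (hf e).resolve_left (h e he))

lemma edge_bound (w : ι → ℝ) (hw : ∀ i, 0 ≤ w i) (h1 : ∑ i, w i = 1) (u : ι → ι → ℝ) (c : ℝ)
    (hcut : ∀ s t : ι → ℝ, (∀ x, s x = 0 ∨ s x = 1) → (∀ x, t x = 0 ∨ t x = 1) →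
      |∑ x, ∑ y, w x * w y * (u x y * (s x * t y))| ≤ c)
    (a b : α) (hab : a ≠ b) (E : Finset (α × α))
    (hE : ∀ e ∈ E, ¬ ((e.1 = a ∨ e.2 = a) ∧ (e.1 = b ∨ e.2 = b)))
    (K : α × α → ι → ι → ℝ) (hK : ∀ e x y, K e x y = 0 ∨ K e x y = 1) :
    |∑ h : α → ι, Wt w h * (u (h a) (h b) * ∏ e ∈ E, K e (h e.1) (h e.2))| ≤ c := by
  classical
  have key : ∑ h : α → ι, Wt w h * (u (h a) (h b) * ∏ e ∈ E, K e (h e.1) (h e.2)) =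
      ∑ h : α → ι, Wt w h * ∑ x, ∑ y, w x * w y * (u x y *
        ((∏ e ∈ E.filter (fun e => ¬ (e.1 = b ∨ e.2 = b)),
            K e (Function.update h a x e.1) (Function.update h a x e.2)) *
         (∏ e ∈ E.filter (fun e => e.1 = b ∨ e.2 = b),
            K e (Function.update h b y e.1) (Function.update h b y e.2)))) := by
    rw [avg_update w h1 a]
    have inner : ∀ x, ∑ h : α → ι, Wt w h * (u (Function.update h a x a) (Function.update h a x b) *
          ∏ e ∈ E, K e (Function.update h a x e.1) (Function.update h a x e.2)) =
        ∑ y, w y * ∑ h : α → ι, Wt w h * (u x y *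
        ((∏ e ∈ E.filter (fun e => ¬ (e.1 = b ∨ e.2 = b)),
            K e (Function.update h a x e.1) (Function.update h a x e.2)) *
         (∏ e ∈ E.filter (fun e => e.1 = b ∨ e.2 = b),
            K e (Function.update h b y e.1) (Function.update h b y e.2)))) := by
      intro x
      rw [avg_update w h1 b]
      refine Finset.sum_congr rfl fun y _ => ?_
      congr 1
      refine Finset.sum_congr rfl fun h _ => ?_
      congr 1
      rw [Function.update_self, Function.update_of_ne hab.symm, Function.update_self]
      congr 1
      rw [← Finset.prod_filter_mul_prod_filter_not E (fun e => e.1 = b ∨ e.2 = b), mul_comm]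
      congr 1
      · refine Finset.prod_congr rfl fun e he => ?_
        rw [Finset.mem_filter] at he
        have h3 := he.2
        push Not at h3
        have : ∀ v, v ≠ b → Function.update (Function.update h b y) a x v =
            Function.update h a x v := by
          intro v hv
          simp only [Function.update_apply, if_neg hv]
        rw [this _ h3.1, this _ h3.2]
      · refine Finset.prod_congr rfl fun e he => ?_
        rw [Finset.mem_filter] at he
        have h3 : ¬ (e.1 = a ∨ e.2 = a) := fun h => hE e he.1 ⟨h, he.2⟩
        push Not at h3
        rw [Function.update_of_ne h3.1, Function.update_of_ne h3.2]
    simp only [inner, Finset.mul_sum]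
    rw [Finset.sum_comm' (t' := Finset.univ) (s' := fun _ => Finset.univ) (by simp)]
    conv_rhs => rw [Finset.sum_comm]; enter [2, x]; rw [Finset.sum_comm]
    rw [Finset.sum_comm]
    refine Finset.sum_congr rfl fun x _ => Finset.sum_congr rfl fun y _ =>
      Finset.sum_congr rfl fun h _ => ?_
    ring
  rw [key]
  refine (Finset.abs_sum_le_sum_abs _ _).trans ?_
  calc _ ≤ ∑ h : α → ι, Wt w h * c := by
        refine Finset.sum_le_sum fun h _ => ?_
        rw [abs_mul, abs_of_nonneg (Wt_nonneg w hw h)]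
        refine mul_le_mul_of_nonneg_left ?_ (Wt_nonneg w hw h)
        exact hcut _ _ (fun x => prod01 _ _ fun e => hK _ _ _) (fun x => prod01 _ _ fun e => hK _ _ _)
    _ = c := by rw [← Finset.sum_mul, Wt_sum w h1, one_mul]

lemma counting (w : ι → ℝ) (hw : ∀ i, 0 ≤ w i) (h1 : ∑ i, w i = 1) (A B : ι → ι → ℝ) (c : ℝ)
    (hA : ∀ x y, A x y = 0 ∨ A x y = 1) (hB : ∀ x y, B x y = 0 ∨ B x y = 1)
    (hcut : ∀ s t : ι → ℝ, (∀ x, s x = 0 ∨ s x = 1) → (∀ x, t x = 0 ∨ t x = 1) →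
      |∑ x, ∑ y, w x * w y * ((A x y - B x y) * (s x * t y))| ≤ c)
    {m : ℕ} (E2 : Finset (Fin m × Fin m)) :
    ∀ E1 : Finset (Fin m × Fin m), (∀ e ∈ E1, e.1 < e.2) → (∀ e ∈ E2, e.1 < e.2) →
      Disjoint E1 E2 →
      |∑ h : Fin m → ι, Wt w h * ((∏ e ∈ E1, A (h e.1) (h e.2)) *
        (∏ e ∈ E2, A (h e.1) (h e.2) - ∏ e ∈ E2, B (h e.1) (h e.2)))| ≤ E2.card * c := by
  classical
  induction E2 using Finset.induction_on with
  | empty => intro E1 _ _ _; simp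
  | insert e0 E2 he0 ih =>
    intro E1 hE1 hE2 hd
    have hlt : e0.1 < e0.2 := hE2 e0 (Finset.mem_insert_self _ _)
    have he1 : e0 ∉ E1 := fun h => Finset.disjoint_left.mp hd h (Finset.mem_insert_self _ _)
    have hd' : Disjoint E1 E2 := hd.mono_right (Finset.subset_insert _ _)
    have ih' := ih (insert e0 E1) (by
        intro e he
        rcases Finset.mem_insert.mp he with rfl | he
        · exact hlt
        · exact hE1 e he) (fun e he => hE2 e (Finset.mem_insert_of_mem he))
      (Finset.disjoint_insert_left.mpr ⟨he0, hd'⟩)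
    have hne : ∀ e ∈ E1 ∪ E2, ¬ ((e.1 = e0.1 ∨ e.2 = e0.1) ∧ (e.1 = e0.2 ∨ e.2 = e0.2)) := by
      intro e he
      have hlt' : e.1 < e.2 := by
        rcases Finset.mem_union.mp he with he | he
        · exact hE1 e he
        · exact hE2 e (Finset.mem_insert_of_mem he)
      have hne : e ≠ e0 := by
        rintro rfl
        rcases Finset.mem_union.mp he with he | he
        · exact he1 he
        · exact he0 he
      rintro ⟨h2 | h2, h3 | h3⟩
      · rw [← h2, ← h3] at hlt; exact lt_irrefl _ hlt
      · exact hne (Prod.ext h2 h3)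
      · rw [← h2, ← h3] at hlt; exact lt_asymm hlt hlt'
      · rw [← h2, ← h3] at hlt; exact lt_irrefl _ hlt
    have hedge := edge_bound w hw h1 (fun x y => A x y - B x y) c hcut e0.1 e0.2 hlt.ne (E1 ∪ E2) hne
      (fun e => if e ∈ E1 then A else B) (by
        intro e x y
        split_ifs
        · exact hA x y
        · exact hB x y)
    have split : ∑ h : Fin m → ι, Wt w h * ((∏ e ∈ E1, A (h e.1) (h e.2)) *
        (∏ e ∈ insert e0 E2, A (h e.1) (h e.2) - ∏ e ∈ insert e0 E2, B (h e.1) (h e.2))) =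
        ∑ h : Fin m → ι, Wt w h * ((A (h e0.1) (h e0.2) - B (h e0.1) (h e0.2)) *
          ∏ e ∈ E1 ∪ E2, (if e ∈ E1 then A else B) (h e.1) (h e.2)) +
        ∑ h : Fin m → ι, Wt w h * ((∏ e ∈ insert e0 E1, A (h e.1) (h e.2)) *
        (∏ e ∈ E2, A (h e.1) (h e.2) - ∏ e ∈ E2, B (h e.1) (h e.2))) := by
      rw [← Finset.sum_add_distrib]
      refine Finset.sum_congr rfl fun h _ => ?_
      rw [Finset.prod_insert he0, Finset.prod_insert he0, Finset.prod_insert he1,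
        Finset.prod_union hd']
      have p1 : ∏ e ∈ E1, (if e ∈ E1 then A else B) (h e.1) (h e.2) =
          ∏ e ∈ E1, A (h e.1) (h e.2) :=
        Finset.prod_congr rfl fun e he => by rw [if_pos he]
      have p2 : ∏ e ∈ E2, (if e ∈ E1 then A else B) (h e.1) (h e.2) =
          ∏ e ∈ E2, B (h e.1) (h e.2) :=
        Finset.prod_congr rfl fun e he => by
          rw [if_neg fun h => Finset.disjoint_left.mp hd' h he]
      rw [p1, p2]
      ring
    rw [split, Finset.card_insert_of_notMem he0]
    refine (abs_add_le _ _).trans ?_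
    push_cast
    linarith

end Counting

end CutAux

namespace CutAux

open scoped Classical in
lemma marg_eq {κ : Type} [Fintype κ] [MeasurableSpace κ] [MeasurableSingletonClass κ]
    (c : ℝ → κ) (hc : Measurable c) {n : ℕ} (π : κ → Fin n) (hπ : Measurable π) (a : Fin n) :
    ∑ p ∈ Finset.univ.filter (fun p => π p = a), μ01.real (c ⁻¹' {p}) =
      μ01.real ((fun x => π (c x)) ⁻¹' {a}) := by
  have e1 := integral_code μ01 c hc (fun p => if π p = a then (1:ℝ) else 0)
  have e2 := integral_code μ01 (fun x => π (c x)) (hπ.comp hc) (fun b => if b = a then (1:ℝ) else 0)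
  rw [e1] at e2
  simp only [mul_ite, mul_one, mul_zero, Finset.sum_ite_eq', Finset.mem_univ, if_true] at e2
  rw [Finset.sum_filter]
  exact e2

open scoped Classical in
lemma pushforward_sum {κ : Type} [Fintype κ] {n m : ℕ} (w : κ → ℝ) (π : κ → Fin n)
    (hm : ∀ a, ∑ p ∈ Finset.univ.filter (fun p => π p = a), w p = 1 / n)
    (Φ : (Fin m → Fin n) → ℝ) :
    ∑ h : Fin m → κ, Wt w h * Φ (fun i => π (h i)) =
      ∑ f : Fin m → Fin n, (1 / (n:ℝ) ^ m) * Φ f := by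
  rw [← Finset.sum_fiberwise (s := Finset.univ) (g := fun (h : Fin m → κ) i => π (h i))]
  refine Finset.sum_congr rfl fun f _ => ?_
  have h1 : ∑ h ∈ Finset.univ.filter (fun h : Fin m → κ => (fun i => π (h i)) = f), Wt w h =
      1 / (n:ℝ) ^ m := by
    have := Finset.prod_univ_sum (fun i : Fin m => Finset.univ.filter (fun p => π p = f i))
      (fun _ p => w p)
    simp only [hm] at this
    rw [Finset.prod_const, Finset.card_univ, Fintype.card_fin, one_div, inv_pow, ← one_div] at this
    rw [this]
    refine Finset.sum_congr ?_ fun _ _ => rfl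
    ext h
    simp [funext_iff]
  rw [← h1, Finset.sum_mul]
  refine Finset.sum_congr rfl fun h hh => ?_
  rw [(Finset.mem_filter.mp hh).2]

open scoped Classical in
/-- Ordered edges. -/
noncomputable def edges {m : ℕ} (F : SimpleGraph (Fin m)) : Finset (Fin m × Fin m) :=
  Finset.univ.filter (fun p => p.1 < p.2 ∧ F.Adj p.1 p.2)

open scoped Classical in
lemma hom_eq {κ : Type} [Fintype κ] {n m : ℕ} (w : κ → ℝ) (π : κ → Fin n)
    (hm : ∀ a, ∑ p ∈ Finset.univ.filter (fun p => π p = a), w p = 1 / n)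
    (F : SimpleGraph (Fin m)) (G : SimpleGraph (Fin n)) :
    homDensityFin F G =
      ∑ h : Fin m → κ, Wt w h * ∏ e ∈ edges F, adjM G (π (h e.1)) (π (h e.2)) := by
  rw [pushforward_sum w π hm (fun f => ∏ e ∈ edges F, adjM G (f e.1) (f e.2))]
  have h1 : ∀ f : Fin m → Fin n, ∏ e ∈ edges F, adjM G (f e.1) (f e.2) =
      if ∀ i j, F.Adj i j → G.Adj (f i) (f j) then 1 else 0 := by
    intro f
    split_ifs with h
    · refine Finset.prod_eq_one fun e he => ?_
      exact if_pos (h _ _ (Finset.mem_filter.mp he).2.2)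
    · push Not at h
      obtain ⟨i, j, hij, hG⟩ := h
      rcases lt_or_gt_of_ne hij.ne with hlt | hlt
      · exact Finset.prod_eq_zero (i := (i, j))
          (Finset.mem_filter.mpr ⟨Finset.mem_univ _, hlt, hij⟩) (if_neg hG)
      · exact Finset.prod_eq_zero (i := (j, i))
          (Finset.mem_filter.mpr ⟨Finset.mem_univ _, hlt, hij.symm⟩) (if_neg fun h => hG h.symm)
  simp only [h1, mul_ite, mul_one, mul_zero]
  rw [← Finset.sum_filter, Finset.sum_const, nsmul_eq_mul, mul_one_div]
  unfold homDensityFin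
  rw [Fintype.card_subtype]

lemma cut_bound {κ : Type} [Fintype κ] [MeasurableSpace κ] [MeasurableSingletonClass κ]
    (c : ℝ → κ) (hc : Measurable c) (u : κ → κ → ℝ) (U : ℝ → ℝ → ℝ) (X : Set ℝ)
    (hX : ∀ᵐ x ∂μ01, x ∈ X) (hU : ∀ x ∈ X, ∀ y ∈ X, U x y = u (c x) (c y))
    (s t : κ → ℝ) (hs : ∀ x, s x = 0 ∨ s x = 1) (ht : ∀ x, t x = 0 ∨ t x = 1) :
    |∑ p, ∑ q, μ01.real (c ⁻¹' {p}) * μ01.real (c ⁻¹' {q}) * (u p q * (s p * t q))| ≤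
      cutNorm U := by
  classical
  have hmeas : ∀ s : κ → ℝ, MeasurableSet {x | s (c x) = 1} := by
    intro s
    have : MeasurableSet {p : κ | s p = 1} := (Set.toFinite _).measurableSet
    exact hc this
  have hval : ∀ s : κ → ℝ, (∀ x, s x = 0 ∨ s x = 1) → ∀ p,
      (volume.restrict ({x | s (c x) = 1} ∩ Set.Icc (0:ℝ) 1)).real (c ⁻¹' {p}) =
        μ01.real (c ⁻¹' {p}) * s p := by
    intro s hs p
    have hp : MeasurableSet (c ⁻¹' {p}) := hc (measurableSet_singleton p)
    rw [measureReal_restrict_apply hp, measureReal_restrict_apply hp]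
    rcases hs p with h | h
    · have : c ⁻¹' {p} ∩ ({x | s (c x) = 1} ∩ Set.Icc (0:ℝ) 1) = ∅ := by
        ext x
        simp only [Set.mem_inter_iff, Set.mem_preimage, Set.mem_singleton_iff, Set.mem_ofPred_eq,
          Set.mem_empty_iff_false, iff_false]
        rintro ⟨rfl, h2, -⟩
        rw [h] at h2
        exact zero_ne_one h2
      rw [this, h]; simp
    · have : c ⁻¹' {p} ∩ ({x | s (c x) = 1} ∩ Set.Icc (0:ℝ) 1) = c ⁻¹' {p} ∩ Set.Icc (0:ℝ) 1 := by
        ext x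
        simp only [Set.mem_inter_iff, Set.mem_preimage, Set.mem_singleton_iff, Set.mem_ofPred_eq]
        constructor
        · rintro ⟨h1, h2, h3⟩; exact ⟨h1, h3⟩
        · rintro ⟨rfl, h3⟩; exact ⟨rfl, h, h3⟩
      rw [this, h, mul_one]
  refine le_csSup ?_ ⟨{x | s (c x) = 1} ∩ Set.Icc (0:ℝ) 1, {x | t (c x) = 1} ∩ Set.Icc (0:ℝ) 1,
    (hmeas s).inter measurableSet_Icc, (hmeas t).inter measurableSet_Icc, Set.inter_subset_right,
    Set.inter_subset_right, ?_⟩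
  · refine ⟨∑ p, ∑ q, |u p q|, ?_⟩
    rintro r ⟨S, T, -, -, hS, hT, rfl⟩
    rw [step_integral c hc u U X hX hU S T hS hT]
    have hle : ∀ S : Set ℝ, S ⊆ Set.Icc (0:ℝ) 1 → ∀ p,
        (volume.restrict S).real (c ⁻¹' {p}) ≤ 1 := by
      intro S hS p
      have h1 : (volume.restrict S).real (c ⁻¹' {p}) ≤ μ01.real (c ⁻¹' {p}) :=
        ENNReal.toReal_mono (measure_ne_top _ _) (Measure.restrict_mono hS le_rfl _)
      have h2 : μ01.real (c ⁻¹' {p}) ≤ μ01.real Set.univ := measureReal_mono (Set.subset_univ _)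
      have h3 : μ01.real Set.univ = 1 := by simp [μ01]
      linarith
    refine (Finset.abs_sum_le_sum_abs _ _).trans (Finset.sum_le_sum fun p _ => ?_)
    refine (Finset.abs_sum_le_sum_abs _ _).trans (Finset.sum_le_sum fun q _ => ?_)
    rw [abs_mul, abs_of_nonneg (mul_nonneg measureReal_nonneg measureReal_nonneg)]
    exact mul_le_of_le_one_left (abs_nonneg _)
      (mul_le_one₀ (hle S hS p) measureReal_nonneg (hle T hT q))
  · rw [step_integral c hc u U X hX hU _ _ Set.inter_subset_right Set.inter_subset_right]
    congr 1
    refine Finset.sum_congr rfl fun p _ => Finset.sum_congr rfl fun q _ => ?_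
    rw [hval s hs, hval t ht]
    ring

lemma hom_diff {n n' m : ℕ} [NeZero n] [NeZero n'] (G : SimpleGraph (Fin n))
    (G' : SimpleGraph (Fin n')) (F : SimpleGraph (Fin m)) (δ : ℝ)
    (h : cutDist (graphonOf G) (graphonOf G') < δ) :
    |homDensityFin F G - homDensityFin F G'| ≤ (edges F).card * δ := by
  classical
  have hne : { r : ℝ | ∃ φ : ℝ → ℝ, IsInvMeasurePreserving φ ∧
      r = cutNorm (fun x y => graphonOf G x y - graphonOf G' (φ x) (φ y)) }.Nonempty :=
    ⟨_, exch 1 (Equiv.refl _), exch_inv 1 (Equiv.refl _), rfl⟩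
  obtain ⟨r, ⟨φ, hφ, rfl⟩, hr⟩ := exists_lt_of_csInf_lt hne h
  have hmp : MeasurePreserving φ μ01 μ01 := hφ.2.1
  obtain ⟨-, ⟨hφm, -⟩, -⟩ := hφ
  let c : ℝ → Fin n × Fin n' := fun x => (cell n x, cell n' (φ x))
  have hc : Measurable c := (measurable_cell n).prodMk ((measurable_cell n').comp hφm)
  let X : Set ℝ := {x | x ∈ Set.Ico (0:ℝ) 1 ∧ φ x ∈ Set.Ico (0:ℝ) 1}
  have hX : ∀ᵐ x ∂μ01, x ∈ X := ae_Ico.and (hmp.quasiMeasurePreserving.ae ae_Ico)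
  let A : Fin n × Fin n' → Fin n × Fin n' → ℝ := fun p q => adjM G p.1 q.1
  let B : Fin n × Fin n' → Fin n × Fin n' → ℝ := fun p q => adjM G' p.2 q.2
  let w : Fin n × Fin n' → ℝ := fun p => μ01.real (c ⁻¹' {p})
  have hU : ∀ x ∈ X, ∀ y ∈ X, graphonOf G x y - graphonOf G' (φ x) (φ y) =
      A (c x) (c y) - B (c x) (c y) := by
    rintro x ⟨hx, hx'⟩ y ⟨hy, hy'⟩
    rw [graphonOf_eq G x y hx hy, graphonOf_eq G' _ _ hx' hy']
  have hcut := cut_bound c hc (fun p q => A p q - B p q) _ X hX hU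
  have m1 : ∀ a, ∑ p ∈ Finset.univ.filter (fun p : Fin n × Fin n' => p.1 = a), w p = 1 / n := by
    intro a
    rw [marg_eq c hc Prod.fst measurable_fst a]
    exact cell_measure n a
  have m2 : ∀ a, ∑ p ∈ Finset.univ.filter (fun p : Fin n × Fin n' => p.2 = a), w p = 1 / n' := by
    intro a
    rw [marg_eq c hc Prod.snd measurable_snd a, ← cell_measure n' a]
    have := hmp.measure_preimage
      ((measurable_cell n') (measurableSet_singleton a)).nullMeasurableSet
    simp only [measureReal_def]
    rw [← this]
    rfl
  have hn : (n:ℝ) ≠ 0 := by exact_mod_cast NeZero.ne n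
  have hw1 : ∑ p, w p = 1 := by
    rw [← Finset.sum_fiberwise (s := Finset.univ) (g := fun p : Fin n × Fin n' => p.1)]
    rw [Finset.sum_congr rfl fun a _ => m1 a]
    simp [hn]
  have := counting w (fun _ => measureReal_nonneg) hw1 A B δ (fun _ _ => adjM_mem _ _ _)
    (fun _ _ => adjM_mem _ _ _) (fun s t hs ht => (hcut s t hs ht).trans hr.le) (edges F) ∅
    (by simp) (fun e he => (Finset.mem_filter.mp he).2.1) (by simp)
  rw [hom_eq w Prod.fst m1 F G, hom_eq w Prod.snd m2 F G', ← Finset.sum_sub_distrib]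
  refine le_trans (le_of_eq ?_) this
  congr 1
  refine Finset.sum_congr rfl fun h _ => ?_
  simp only [Finset.prod_empty, one_mul, A, B]
  ring

theorem backward (N : ℕ → ℕ) (G : ∀ i, SimpleGraph (Fin (N i)))
    (hN : Filter.Tendsto N Filter.atTop Filter.atTop)
    (h : ∀ ε : ℝ, 0 < ε → ∃ M : ℕ, ∀ i ≥ M, ∀ j ≥ M,
        cutDist (graphonOf (G i)) (graphonOf (G j)) ≤ ε)
    (m : ℕ) (F : SimpleGraph (Fin m)) : ∃ L : ℝ,
        Filter.Tendsto (fun i => homDensityFin F (G i)) Filter.atTop (nhds L) := by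
  refine cauchySeq_tendsto_of_complete ?_
  rw [Metric.cauchySeq_iff]
  intro ε hε
  let k : ℝ := (edges F).card + 1
  have hk : 0 < k := by positivity
  obtain ⟨M, hM⟩ := h (ε / (2 * k)) (by positivity)
  obtain ⟨M', hM'⟩ := Filter.eventually_atTop.mp (hN.eventually (Filter.eventually_gt_atTop 0))
  refine ⟨max M M', fun i hi j hj => ?_⟩
  have : NeZero (N i) := ⟨(hM' i (le_trans (le_max_right _ _) hi)).ne'⟩
  have : NeZero (N j) := ⟨(hM' j (le_trans (le_max_right _ _) hj)).ne'⟩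
  have h1 := hM i (le_trans (le_max_left _ _) hi) j (le_trans (le_max_left _ _) hj)
  have h2 := hom_diff (G i) (G j) F (ε / k) (h1.trans_lt (by gcongr; linarith))
  rw [Real.dist_eq]
  refine h2.trans_lt ?_
  rw [← mul_div_assoc, div_lt_iff₀ hk]
  simp only [k]
  linarith

end CutAux

/-- A sequence of finite simple graphs with `|V(G_n)| → ∞` is convergent (all homomorphism
densities converge) if and only if it is Cauchy in the cut distance `δ_□`. -/
theorem graph_conv_iff_cauchy_cutDist (N : ℕ → ℕ) (G : ∀ i, SimpleGraph (Fin (N i)))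
    (hN : Filter.Tendsto N Filter.atTop Filter.atTop) :
    (∀ (m : ℕ) (F : SimpleGraph (Fin m)), ∃ L : ℝ,
        Filter.Tendsto (fun i => homDensityFin F (G i)) Filter.atTop (nhds L)) ↔
    (∀ ε : ℝ, 0 < ε → ∃ M : ℕ, ∀ i ≥ M, ∀ j ≥ M,
        cutDist (graphonOf (G i)) (graphonOf (G j)) ≤ ε) := by
  exact ⟨fun h ε hε => CutAux.forward N G hN h ε hε, fun h m F => CutAux.backward N G hN h m F⟩
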